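/- Let G : B₁ × ℝ^d × Sym(d) → ℝ be continuous and degenerate elliptic, and let u ∈ C(B₁) be a viscosity solution of G(x, Du, D²u) = 0 in B₁. Let Ω ⊂ B₁ be open, let ψ be twice continuously differentiable in a neighborhood of cl(Ω) × cl(Ω), define v(x,y) := u(x) − u(y), and suppose (x̄, ȳ) ∈ Ω × Ω is a local maximum point of v − ψ in Ω × Ω. Then for each ε > 0 there exist matrices X, Y ∈ Sym(d) such that G(x̄, D_xψ(x̄,ȳ), X) ≤ 0 ≤ G(ȳ, −D_yψ(x̄,ȳ), Y), and the matrix inequality −(1/ε + ‖A‖) I ≤ [[X, 0],[0, −Y]] ≤ A + εA² holds in Sym(2d), where A = D²ψ(x̄,ȳ) ∈ Sym(2d) and I is the identity of Sym(2d). -/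

import Mathlib

/-!
Write `a`, `c` for the partial gradients and `A` for the Hessian of `ψ` at the maximum point, and
subtract from `u` and `w = -u` the affine functions with slopes `a` and `c`. Maximality, Taylor's
formula and Young's inequality bound the sum of the two functions at `(x, y)` by
`⟪B η, η⟫ / 2 + lam / 2 * ‖(x, y) - η‖ ^ 2` for every `η`, where `B = A + ε A ^ 2` and
`lam = 1 / ε + ‖A‖` up to small multiples of the identity.

The supremum of `⟪x, ω⟫ + u x - lam / 2 * ‖x‖ ^ 2` over a small ball is convex and Lipschitz in
`ω`; it is the sup-convolution of `u` up to a quadratic term and scaling. Its Moreau envelope is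
even `C^{1,1}`, which allows Rademacher's theorem for the gradient to replace Alexandrov's theorem.
The sum of the two envelopes is touched from above at `0` by a quadratic function. Jensen's lemma
gives points near `0` where both gradients are differentiable and the second derivative of the sum
is almost bounded by that quadratic function: after a small perturbation the gradients of the
difference at contact points with affine functions fill a ball, while a Lipschitz map sends the null
set of points of nondifferentiability to a null set.

The Hessian of the envelope at such a point is bounded above by less than `1 / μ` when the
envelope parameter `μ` is small, and then the supremum over the ball is attained at the gradient
of the envelope. Translating the point and `ω` together then turns the expansion of the envelope
into a superjet of `u`, with Hessian bounded below because the envelope is convex. Compactness of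
the resulting superjets gives limiting superjets at the maximum point, and semicontinuity
transfers the equation to them.
-/

open Metric Set Filter
open scoped RealInnerProductSpace

noncomputable section

abbrev Euc (d : ℕ) := EuclideanSpace ℝ (Fin d)
abbrev Mat (d : ℕ) := Matrix (Fin d) (Fin d) ℝ

noncomputable def matOpNorm {n : Type*} [Fintype n] [DecidableEq n]
    (M : Matrix n n ℝ) : ℝ := ‖Matrix.toEuclideanCLM (𝕜 := ℝ) M‖

def UniformlyElliptic {d : ℕ} (lam Lam : ℝ) (F : Mat d → ℝ) : Prop :=
  F 0 = 0 ∧ ∀ M N : Mat d, M.IsHermitian → N.PosSemidef →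
    lam * matOpNorm N ≤ F (M + N) - F M ∧ F (M + N) - F M ≤ Lam * matOpNorm N

noncomputable def hessM {d : ℕ} (φ : Euc d → ℝ) (x : Euc d) : Mat d :=
  Matrix.of fun i j =>
    iteratedFDeriv ℝ 2 φ x ![EuclideanSpace.single i 1, EuclideanSpace.single j 1]

def ViscSubSol {d : ℕ} (F : Mat d → ℝ) (θ f : Euc d → ℝ) (q : Euc d) (u : Euc d → ℝ) : Prop :=
  ∀ x₀ ∈ ball (0 : Euc d) 1, ∀ φ : Euc d → ℝ, ContDiffAt ℝ 2 φ x₀ →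
    IsLocalMax (fun x => u x - φ x) x₀ → q + gradient φ x₀ ≠ 0 →
      f x₀ ≤ ‖q + gradient φ x₀‖ ^ (θ x₀) * F (hessM φ x₀)

def ViscSuperSol {d : ℕ} (F : Mat d → ℝ) (θ f : Euc d → ℝ) (q : Euc d) (u : Euc d → ℝ) : Prop :=
  ∀ x₀ ∈ ball (0 : Euc d) 1, ∀ φ : Euc d → ℝ, ContDiffAt ℝ 2 φ x₀ →
    IsLocalMin (fun x => u x - φ x) x₀ → q + gradient φ x₀ ≠ 0 →
      ‖q + gradient φ x₀‖ ^ (θ x₀) * F (hessM φ x₀) ≤ f x₀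

def ViscSol {d : ℕ} (F : Mat d → ℝ) (θ f : Euc d → ℝ) (q : Euc d) (u : Euc d → ℝ) : Prop :=
  ViscSubSol F θ f q u ∧ ViscSuperSol F θ f q u

def ViscSubSolPure {d : ℕ} (F : Mat d → ℝ) (g : Euc d → ℝ) (u : Euc d → ℝ)
    (s : Set (Euc d)) : Prop :=
  ∀ x₀ ∈ s, ∀ φ : Euc d → ℝ, ContDiffAt ℝ 2 φ x₀ →
    IsLocalMax (fun x => u x - φ x) x₀ → g x₀ ≤ F (hessM φ x₀)

def ViscSuperSolPure {d : ℕ} (F : Mat d → ℝ) (g : Euc d → ℝ) (u : Euc d → ℝ)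
    (s : Set (Euc d)) : Prop :=
  ∀ x₀ ∈ s, ∀ φ : Euc d → ℝ, ContDiffAt ℝ 2 φ x₀ →
    IsLocalMin (fun x => u x - φ x) x₀ → F (hessM φ x₀) ≤ g x₀

def ViscSolPure {d : ℕ} (F : Mat d → ℝ) (g : Euc d → ℝ) (u : Euc d → ℝ)
    (s : Set (Euc d)) : Prop :=
  ViscSubSolPure F g u s ∧ ViscSuperSolPure F g u s

noncomputable def prodBasis {d : ℕ} : (Fin d ⊕ Fin d) → Euc d × Euc d
  | Sum.inl i => (EuclideanSpace.single i 1, 0)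
  | Sum.inr j => (0, EuclideanSpace.single j 1)

/-- Hessian of a function on `Euc d × Euc d` as a `2d × 2d` matrix. -/
noncomputable def hess2 {d : ℕ} (ψ : Euc d × Euc d → ℝ) (z : Euc d × Euc d) :
    Matrix (Fin d ⊕ Fin d) (Fin d ⊕ Fin d) ℝ :=
  Matrix.of fun i j => iteratedFDeriv ℝ 2 ψ z ![prodBasis i, prodBasis j]

/-- The partial order on symmetric matrices: `A ≼ B` iff `B - A` is positive semidefinite. -/
def MatLE {n : Type*} [Fintype n] (A B : Matrix n n ℝ) : Prop := (B - A).PosSemidef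

open MeasureTheory Asymptotics
open scoped Topology

section SecondOrder

variable {E F : Type*} [NormedAddCommGroup E] [NormedSpace ℝ E]
  [NormedAddCommGroup F] [NormedSpace ℝ F]

theorem taylor_two_isLittleO {f : E → F} {f' : E → E →L[ℝ] F} {f'' : E →L[ℝ] E →L[ℝ] F} {x : E}
    (hf : ∀ᶠ y in 𝓝 x, HasFDerivAt f (f' y) y) (hf' : HasFDerivAt f' f'' x) :
    (fun h => f (x + h) - f x - f' x h - (1 / 2 : ℝ) • f'' h h) =o[𝓝 0] fun h => ‖h‖ ^ 2 := by
  have hsymm : ∀ h k, f'' h k = f'' k h := fun h k =>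
    second_derivative_symmetric_of_eventually hf hf' h k
  have hshift : Tendsto (x + ·) (𝓝 0) (𝓝 x) :=
    (continuous_const_add x).tendsto' 0 x (add_zero x)
  refine isLittleO_iff.2 fun c hc => ?_
  have hlin := (hasFDerivAt_iff_isLittleO_nhds_zero.1 hf').def hc
  obtain ⟨r, hr, hball⟩ := eventually_nhds_iff_ball.1 (hlin.and (hshift.eventually hf))
  filter_upwards [ball_mem_nhds 0 hr] with h hh
  have hderiv : ∀ k ∈ closedBall (0 : E) ‖h‖,
      HasFDerivWithinAt (fun k => f (x + k) - f x - f' x k - (1 / 2 : ℝ) • f'' k k)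
        (f' (x + k) - f' x - f'' k) (closedBall 0 ‖h‖) k := by
    intro k hk
    have hk' : k ∈ ball (0 : E) r := closedBall_subset_ball (mem_ball_zero_iff.1 hh) hk
    have hquad : HasFDerivAt (fun k => (1 / 2 : ℝ) • f'' k k) (f'' k) k := by
      refine ((f''.hasFDerivAt.clm_apply (hasFDerivAt_id k)).const_smul (1 / 2 : ℝ)).congr_fderiv ?_
      ext l
      simp only [smul_apply, add_apply, ContinuousLinearMap.comp_apply,
        ContinuousLinearMap.flip_apply, ContinuousLinearMap.id_apply, id, hsymm l k,
        ← two_smul ℝ (f'' k l), smul_smul]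
      norm_num
    have hcomp := (hball k hk').2.comp k ((hasFDerivAt_id k).const_add x)
    exact (((hcomp.sub_const (f x)).sub (f' x).hasFDerivAt).sub hquad).hasFDerivWithinAt
  have hbound : ∀ k ∈ closedBall (0 : E) ‖h‖, ‖f' (x + k) - f' x - f'' k‖ ≤ c * ‖h‖ := by
    intro k hk
    have hk' : k ∈ ball (0 : E) r := closedBall_subset_ball (mem_ball_zero_iff.1 hh) hk
    exact (hball k hk').1.trans (by gcongr; exact mem_closedBall_zero_iff.1 hk)
  have hmvt := (convex_closedBall (0 : E) ‖h‖).norm_image_sub_le_of_norm_hasFDerivWithin_le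
    hderiv hbound (mem_closedBall_self (norm_nonneg h)) (mem_closedBall_zero_iff.2 le_rfl)
  simpa [sq, mul_assoc] using hmvt

end SecondOrder

section Gradient

variable {E : Type*} [NormedAddCommGroup E] [InnerProductSpace ℝ E]

theorem isSymmetric_add_smul_one {T : E →L[ℝ] E} (hT : (T : E →ₗ[ℝ] E).IsSymmetric) (c : ℝ) :
    ((T + c • 1 : E →L[ℝ] E) : E →ₗ[ℝ] E).IsSymmetric :=
  hT.add (LinearMap.IsSymmetric.one.smul (c := c) rfl)

theorem inner_add_smul_one_apply_self (T : E →L[ℝ] E) (c : ℝ) (k : E) :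
    ⟪(T + c • (1 : E →L[ℝ] E)) k, k⟫ = ⟪T k, k⟫ + c * ‖k‖ ^ 2 := by
  rw [add_apply, smul_apply, one_apply_eq_self, inner_add_left, real_inner_smul_left,
    real_inner_self_eq_norm_sq]

theorem inner_apply_self_le_opNorm_mul_sq (T : E →L[ℝ] E) (k : E) :
    ⟪T k, k⟫ ≤ ‖T‖ * ‖k‖ ^ 2 := by
  grw [real_inner_le_norm, T.le_opNorm]
  exact le_of_eq (by ring)

theorem inner_apply_self_nonpos_of_eventually_le {T : E →L[ℝ] E}
    (hT : ∀ c > 0, ∀ᶠ h in 𝓝 0, ⟪T h, h⟫ ≤ c * ‖h‖ ^ 2) (k : E) : ⟪T k, k⟫ ≤ 0 := by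
  have hle : ∀ c > 0, ⟪T k, k⟫ ≤ c * ‖k‖ ^ 2 := by
    intro c hc
    have hline : Tendsto (fun t : ℝ => t • k) (𝓝[>] 0) (𝓝 0) :=
      ((by fun_prop : Continuous fun t : ℝ => t • k).tendsto' 0 0 (zero_smul ℝ k)).mono_left
        nhdsWithin_le_nhds
    obtain ⟨t, ht, htpos⟩ := ((hline.eventually (hT c hc)).and self_mem_nhdsWithin).exists
    rw [map_smul, real_inner_smul_left, real_inner_smul_right, norm_smul, mul_pow, Real.norm_eq_abs,
      sq_abs] at ht
    exact le_of_mul_le_mul_left (by linarith) (pow_pos (mem_Ioi.1 htpos) 2)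
  have hlim : Tendsto (fun c : ℝ => c * ‖k‖ ^ 2) (𝓝[>] 0) (𝓝 0) :=
    ((continuous_mul_const _).tendsto' 0 0 (zero_mul _)).mono_left nhdsWithin_le_nhds
  exact ge_of_tendsto hlim (eventually_mem_nhdsWithin.mono hle)

variable [CompleteSpace E] {f : E → ℝ} {v : E → E} {D : E →L[ℝ] E} {x : E}

theorem hasFDerivAt_toDual_comp (hv : HasFDerivAt v D x) :
    HasFDerivAt (fun y => InnerProductSpace.toDual ℝ E (v y))
      ((innerSL ℝ : E →L[ℝ] E →L[ℝ] ℝ).comp D) x :=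
  (innerSL ℝ : E →L[ℝ] E →L[ℝ] ℝ).hasFDerivAt.comp x hv

theorem isSymmetric_of_hasFDerivAt_gradient (hf : ∀ᶠ y in 𝓝 x, HasGradientAt f (v y) y)
    (hv : HasFDerivAt v D x) : (D : E →ₗ[ℝ] E).IsSymmetric := fun h k =>
  (second_derivative_symmetric_of_eventually hf (hasFDerivAt_toDual_comp hv) h k).trans
    (real_inner_comm _ _)

theorem taylor_two_isLittleO_of_hasGradientAt (hf : ∀ᶠ y in 𝓝 x, HasGradientAt f (v y) y)
    (hv : HasFDerivAt v D x) :
    (fun h => f (x + h) - f x - ⟪v x, h⟫ - 1 / 2 * ⟪D h, h⟫) =o[𝓝 0] fun h => ‖h‖ ^ 2 :=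
  taylor_two_isLittleO hf (hasFDerivAt_toDual_comp hv)

theorem eventually_le_taylor_two_of_hasGradientAt (hf : ∀ᶠ y in 𝓝 x, HasGradientAt f (v y) y)
    (hv : HasFDerivAt v D x) :
    ∀ τ > 0, ∀ᶠ h in 𝓝 0, f (x + h) ≤ f x + ⟪v x, h⟫ + 1 / 2 * ⟪D h, h⟫ + τ * ‖h‖ ^ 2 := by
  intro τ hτ
  filter_upwards [(taylor_two_isLittleO_of_hasGradientAt hf hv).def hτ] with h hh
  have hupper := (abs_le.1 hh).2
  rw [norm_pow, norm_norm] at hupper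
  linarith

theorem inner_apply_self_nonpos_of_isLocalMax (hf : ∀ᶠ y in 𝓝 x, HasGradientAt f (v y) y)
    (hv : HasFDerivAt v D x) (hmax : IsLocalMax (fun y => f y - ⟪v x, y⟫) x) (k : E) :
    ⟪D k, k⟫ ≤ 0 := by
  refine inner_apply_self_nonpos_of_eventually_le (fun c hc => ?_) k
  have hshift : Tendsto (x + ·) (𝓝 0) (𝓝 x) :=
    (continuous_const_add x).tendsto' 0 x (add_zero x)
  filter_upwards [(taylor_two_isLittleO_of_hasGradientAt hf hv).def (half_pos hc),
    hshift.eventually hmax] with h htaylor hle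
  have hlower := (abs_le.1 htaylor).1
  rw [inner_add_right] at hle
  rw [norm_pow, norm_norm] at hlower
  linarith

theorem hasGradientAt_half_inner_apply_self {T : E →L[ℝ] E}
    (hT : (T : E →ₗ[ℝ] E).IsSymmetric) (x : E) :
    HasGradientAt (fun z => 1 / 2 * ⟪T z, z⟫) (T x) x := by
  refine ((T.hasFDerivAt.inner ℝ (hasFDerivAt_id x)).const_mul (1 / 2)).congr_fderiv ?_
  ext k
  have hsymm : ⟪T k, x⟫ = ⟪T x, k⟫ := (hT k x).trans (real_inner_comm _ _)
  simp only [one_div, id_eq, smul_apply, ContinuousLinearMap.comp_apply,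
    ContinuousLinearMap.prod_apply, ContinuousLinearMap.id_apply, fderivInnerCLM_apply, hsymm,
    smul_eq_mul, InnerProductSpace.toDual_apply_apply]
  ring

theorem hasGradientAt_inner_sub_add_half_inner_sub {T : E →L[ℝ] E}
    (hT : (T : E →ₗ[ℝ] E).IsSymmetric) (p x y : E) :
    HasGradientAt (fun y => ⟪p, y - x⟫ + 1 / 2 * ⟪T (y - x), y - x⟫) (p + T (y - x)) y := by
  have hsub : HasFDerivAt (fun y => y - x) (.id ℝ E) y := (hasFDerivAt_id y).sub_const x
  have hquad : HasFDerivAt (fun y => 1 / 2 * ⟪T (y - x), y - x⟫)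
      ((InnerProductSpace.toDual ℝ E (T (y - x))).comp (.id ℝ E)) y :=
    HasFDerivAt.comp y (g := fun z => 1 / 2 * ⟪T z, z⟫) (f := fun y => y - x)
      (hasGradientAt_half_inner_apply_self hT (y - x)).hasFDerivAt hsub
  rw [hasGradientAt_iff_hasFDerivAt, map_add]
  exact ((innerSL ℝ p).hasFDerivAt.comp y hsub).add hquad

theorem gradient_eq_zero_of_le_half_inner_apply_self {T : E →L[ℝ] E}
    (hT : (T : E →ₗ[ℝ] E).IsSymmetric) {p : E} (hf : HasGradientAt f p 0)
    (h0 : 0 ≤ f 0) (hle : ∀ z, f z ≤ 1 / 2 * ⟪T z, z⟫) : p = 0 := by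
  have hmax : IsLocalMax (fun z => f z - 1 / 2 * ⟪T z, z⟫) 0 := .of_forall fun z => by
    simp only [map_zero, inner_zero_left, mul_zero, sub_zero]
    linarith [hle z]
  have hzero := hmax.hasFDerivAt_eq_zero
    (hf.hasFDerivAt.fun_sub (hasGradientAt_half_inner_apply_self hT 0).hasFDerivAt)
  simpa using hzero

end Gradient

section Jensen

variable {E : Type*} [NormedAddCommGroup E]

theorem exists_differentiableAt_of_ball_subset_image [NormedSpace ℝ E] [FiniteDimensional ℝ E]
    {v : E → E} {C : NNReal} (hv : LipschitzWith C v) {S : Set E} {p : E} {r : ℝ} (hr : 0 < r)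
    (hS : ball p r ⊆ v '' S) : ∃ z ∈ S, DifferentiableAt ℝ v z := by
  by_contra! hnot
  borelize E
  have hSnull : μH[Module.finrank ℝ E] S = 0 := measure_mono_null hnot hv.ae_differentiableAt
  have himage := hv.hausdorffMeasure_image_le (d := Module.finrank ℝ E) (Nat.cast_nonneg _) S
  rw [hSnull, mul_zero, nonpos_iff_eq_zero] at himage
  exact (measure_ball_pos μH[Module.finrank ℝ E] p hr).ne' (measure_mono_null hS himage)

variable [InnerProductSpace ℝ E] [FiniteDimensional ℝ E]

theorem ball_subset_image_gradient_of_le_neg_sq {f : E → ℝ} {v : E → E}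
    (hf : ∀ z, HasGradientAt f (v z) z) {c : ℝ} (h0 : 0 ≤ f 0)
    (hle : ∀ z, f z ≤ -(c * ‖z‖ ^ 2)) {s : ℝ} (hs : 0 < s) :
    ball 0 (c * s) ⊆ v '' {z | ‖z‖ < s ∧ IsLocalMax (fun y => f y - ⟪v z, y⟫) z} := by
  intro p hp
  have hcont : Continuous fun y => f y - ⟪p, y⟫ :=
    (continuous_iff_continuousAt.2 fun z => (hf z).continuousAt).sub (by fun_prop)
  have hzero : (0 : E) ∈ closedBall 0 s := mem_closedBall_self hs.le
  obtain ⟨z, hz, hzmax⟩ := (isCompact_closedBall 0 s).exists_isMaxOn ⟨0, hzero⟩ hcont.continuousOn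
  have hzs : ‖z‖ < s := by
    refine (mem_closedBall_zero_iff.1 hz).lt_of_ne fun hzs => ?_
    have hz0 : f 0 - ⟪p, 0⟫ ≤ f z - ⟪p, z⟫ := hzmax hzero
    have hpz := neg_le_of_abs_le (abs_real_inner_le_norm p z)
    have hlez := hle z
    rw [mem_ball_zero_iff] at hp
    rw [hzs] at hpz hlez
    rw [inner_zero_right] at hz0
    nlinarith
  have hmax : IsLocalMax (fun y => f y - ⟪p, y⟫) z :=
    hzmax.isLocalMax (closedBall_mem_nhds_of_mem (mem_ball_zero_iff.2 hzs))
  have hgrad : v z = p := by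
    have hcrit := hmax.hasFDerivAt_eq_zero ((hf z).hasFDerivAt.sub (innerSL ℝ p).hasFDerivAt)
    exact (InnerProductSpace.toDual ℝ E).injective (sub_eq_zero.1 hcrit)
  exact ⟨z, ⟨hzs, hgrad ▸ hmax⟩, hgrad⟩

theorem exists_hasFDerivAt_gradient_nonpos {f : E → ℝ} {v : E → E} {C : NNReal}
    (hf : ∀ z, HasGradientAt f (v z) z) (hv : LipschitzWith C v) {c : ℝ} (hc : 0 < c)
    (h0 : 0 ≤ f 0) (hle : ∀ z, f z ≤ -(c * ‖z‖ ^ 2)) {s : ℝ} (hs : 0 < s) :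
    ∃ (z : E) (D : E →L[ℝ] E), ‖z‖ < s ∧ HasFDerivAt v D z ∧ ∀ k, ⟪D k, k⟫ ≤ 0 := by
  obtain ⟨z, ⟨hzs, hmax⟩, hdiff⟩ := exists_differentiableAt_of_ball_subset_image hv
    (mul_pos hc hs) (ball_subset_image_gradient_of_le_neg_sq hf h0 hle hs)
  exact ⟨z, fderiv ℝ v z, hzs, hdiff.hasFDerivAt, fun k =>
    inner_apply_self_nonpos_of_isLocalMax (v := v) (.of_forall hf) hdiff.hasFDerivAt hmax k⟩

theorem exists_hasFDerivAt_gradient_le {f : E → ℝ} {v : E → E} {C : NNReal} {T : E →L[ℝ] E}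
    (hT : (T : E →ₗ[ℝ] E).IsSymmetric) (hf : ∀ z, HasGradientAt f (v z) z)
    (hv : LipschitzWith C v) (h0 : 0 ≤ f 0) (hle : ∀ z, f z ≤ 1 / 2 * ⟪T z, z⟫) {κ s : ℝ}
    (hκ : 0 < κ) (hs : 0 < s) :
    ∃ (z : E) (D : E →L[ℝ] E), ‖z‖ < s ∧ HasFDerivAt v D z ∧
      ∀ k, ⟪D k, k⟫ ≤ ⟪T k, k⟫ + κ * ‖k‖ ^ 2 := by
  set Tκ : E →L[ℝ] E := T + κ • 1
  have hinner : ∀ k, ⟪Tκ k, k⟫ = ⟪T k, k⟫ + κ * ‖k‖ ^ 2 := inner_add_smul_one_apply_self T κ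
  have hTκsymm : (Tκ : E →ₗ[ℝ] E).IsSymmetric := isSymmetric_add_smul_one hT κ
  have hgrad : ∀ z, HasGradientAt (fun z => f z - 1 / 2 * ⟪Tκ z, z⟫) (v z - Tκ z) z := fun z => by
    rw [hasGradientAt_iff_hasFDerivAt, map_sub]
    exact (hf z).hasFDerivAt.fun_sub (hasGradientAt_half_inner_apply_self hTκsymm z).hasFDerivAt
  obtain ⟨z, D, hz, hD, hDle⟩ := exists_hasFDerivAt_gradient_nonpos (c := κ / 2) hgrad
    (hv.sub Tκ.lipschitz) (half_pos hκ) (by simpa using h0)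
    (fun z => by linarith [hle z, hinner z]) hs
  refine ⟨z, D + Tκ, hz, (hD.add Tκ.hasFDerivAt).congr_of_eventuallyEq
      (.of_forall fun _ => (sub_add_cancel _ _).symm), fun k => ?_⟩
  rw [add_apply, inner_add_left, hinner]
  linarith [hDle k]

end Jensen

section SumGradient

variable {E F : Type*} [NormedAddCommGroup E] [NormedAddCommGroup F] {e₁ : E → ℝ} {e₂ : F → ℝ}
  {v₁ : E → E} {v₂ : F → F}

theorem differentiableAt_fst_snd_of_prod [NormedSpace ℝ E] [NormedSpace ℝ F]
    {z : WithLp 2 (E × F)}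
    (h : DifferentiableAt ℝ
      (fun z : WithLp 2 (E × F) => WithLp.toLp 2 (v₁ z.fst, v₂ z.snd)) z) :
    DifferentiableAt ℝ v₁ z.fst ∧ DifferentiableAt ℝ v₂ z.snd := by
  have hpair : Differentiable ℝ (WithLp.toLp 2 : E × F → WithLp 2 (E × F)) :=
    (WithLp.prodContinuousLinearEquiv 2 ℝ E F).symm.differentiable
  constructor
  · have hinl : DifferentiableAt ℝ (fun x : E => WithLp.toLp 2 (x, z.snd)) z.fst :=
      hpair.differentiableAt.comp _ (by fun_prop)
    exact (WithLp.fstL 2 ℝ E F).differentiableAt.comp z.fst (h.comp z.fst hinl)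
  · have hinr : DifferentiableAt ℝ (fun y : F => WithLp.toLp 2 (z.fst, y)) z.snd :=
      hpair.differentiableAt.comp _ (by fun_prop)
    exact (WithLp.sndL 2 ℝ E F).differentiableAt.comp z.snd (h.comp z.snd hinr)

theorem eventually_mem_nhds_and_mem_ball [NormedSpace ℝ E] {K : Set E} {v : E → E}
    (hv : ContinuousAt v 0) (hv0 : v 0 = 0) (hK : K ∈ 𝓝 0) (a : ℝ) {τ : ℝ} (hτ : 0 < τ) :
    ∀ᶠ ω in 𝓝 0, K ∈ 𝓝 (v ω) ∧ (v ω, a • v ω - ω) ∈ ball (0 : E × E) τ := by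
  have hpair : ContinuousAt (fun ω => (v ω, a • v ω - ω)) 0 := by fun_prop
  rw [ContinuousAt, hv0] at hv
  rw [ContinuousAt, hv0, smul_zero, sub_zero] at hpair
  exact (hv.eventually (eventually_mem_nhds_iff.2 hK)).and
    (hpair.eventually (ball_mem_nhds _ hτ))

variable [InnerProductSpace ℝ E] [InnerProductSpace ℝ F]

theorem hasGradientAt_add_fst_snd [CompleteSpace E] [CompleteSpace F]
    {z : WithLp 2 (E × F)} (h₁ : HasGradientAt e₁ (v₁ z.fst) z.fst)
    (h₂ : HasGradientAt e₂ (v₂ z.snd) z.snd) :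
    HasGradientAt (fun z : WithLp 2 (E × F) => e₁ z.fst + e₂ z.snd)
      (WithLp.toLp 2 (v₁ z.fst, v₂ z.snd)) z := by
  have hfst := h₁.hasFDerivAt.comp z (WithLp.fstL 2 ℝ E F).hasFDerivAt
  have hsnd := h₂.hasFDerivAt.comp z (WithLp.sndL 2 ℝ E F).hasFDerivAt
  refine (hfst.add hsnd).congr_fderiv ?_
  ext k
  simp

variable [FiniteDimensional ℝ E] [FiniteDimensional ℝ F]

theorem exists_hasFDerivAt_gradient_add_le {C₁ C₂ : NNReal}
    {T : WithLp 2 (E × F) →L[ℝ] WithLp 2 (E × F)}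
    (hT : (T : WithLp 2 (E × F) →ₗ[ℝ] WithLp 2 (E × F)).IsSymmetric)
    (h₁ : ∀ x, HasGradientAt e₁ (v₁ x) x) (h₂ : ∀ y, HasGradientAt e₂ (v₂ y) y)
    (hv₁ : LipschitzWith C₁ v₁) (hv₂ : LipschitzWith C₂ v₂) (h0 : 0 ≤ e₁ 0 + e₂ 0)
    (hle : ∀ z : WithLp 2 (E × F), e₁ z.fst + e₂ z.snd ≤ 1 / 2 * ⟪T z, z⟫)
    {κ s : ℝ} (hκ : 0 < κ) (hs : 0 < s) :
    ∃ (z : WithLp 2 (E × F)) (D₁ : E →L[ℝ] E) (D₂ : F →L[ℝ] F), ‖z‖ < s ∧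
      HasFDerivAt v₁ D₁ z.fst ∧ HasFDerivAt v₂ D₂ z.snd ∧
      ∀ k : WithLp 2 (E × F), ⟪D₁ k.fst, k.fst⟫ + ⟪D₂ k.snd, k.snd⟫ ≤ ⟪T k, k⟫ + κ * ‖k‖ ^ 2 := by
  let pair := (WithLp.prodContinuousLinearEquiv 2 ℝ E F).symm
  let v : WithLp 2 (E × F) → WithLp 2 (E × F) := fun z => WithLp.toLp 2 (v₁ z.fst, v₂ z.snd)
  have hv : LipschitzWith _ v := pair.lipschitz.comp
    ((hv₁.comp (WithLp.fstL 2 ℝ E F).lipschitz).prodMk (hv₂.comp (WithLp.sndL 2 ℝ E F).lipschitz))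
  obtain ⟨z, D, hz, hD, hDle⟩ := exists_hasFDerivAt_gradient_le hT
    (fun z => hasGradientAt_add_fst_snd (h₁ z.fst) (h₂ z.snd)) hv h0 hle hκ hs
  obtain ⟨hd₁, hd₂⟩ := differentiableAt_fst_snd_of_prod hD.differentiableAt
  refine ⟨z, _, _, hz, hd₁.hasFDerivAt, hd₂.hasFDerivAt, fun k => ?_⟩
  have hDk := hD.unique (pair.hasFDerivAt.comp z
    ((hd₁.hasFDerivAt.comp z (WithLp.fstL 2 ℝ E F).hasFDerivAt).prodMk
      (hd₂.hasFDerivAt.comp z (WithLp.sndL 2 ℝ E F).hasFDerivAt)))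
  simpa [hDk, pair, WithLp.prod_inner_apply] using hDle k

theorem exists_hasFDerivAt_gradient_add_le_of_mem_nhds {C₁ C₂ : NNReal}
    {T : WithLp 2 (E × F) →L[ℝ] WithLp 2 (E × F)} {K : Set E} {L : Set F}
    (hT : (T : WithLp 2 (E × F) →ₗ[ℝ] WithLp 2 (E × F)).IsSymmetric)
    (h₁ : ∀ x, HasGradientAt e₁ (v₁ x) x) (h₂ : ∀ y, HasGradientAt e₂ (v₂ y) y)
    (hv₁ : LipschitzWith C₁ v₁) (hv₂ : LipschitzWith C₂ v₂) (h0 : 0 ≤ e₁ 0 + e₂ 0)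
    (hle : ∀ z : WithLp 2 (E × F), e₁ z.fst + e₂ z.snd ≤ 1 / 2 * ⟪T z, z⟫)
    (hK : K ∈ 𝓝 0) (hL : L ∈ 𝓝 0) (a : ℝ) {κ τ : ℝ} (hκ : 0 < κ) (hτ : 0 < τ) :
    ∃ (x : E) (y : F) (D₁ : E →L[ℝ] E) (D₂ : F →L[ℝ] F),
      (K ∈ 𝓝 (v₁ x) ∧ (v₁ x, a • v₁ x - x) ∈ ball (0 : E × E) τ) ∧
      (L ∈ 𝓝 (v₂ y) ∧ (v₂ y, a • v₂ y - y) ∈ ball (0 : F × F) τ) ∧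
      HasFDerivAt v₁ D₁ x ∧ HasFDerivAt v₂ D₂ y ∧ ∀ k : WithLp 2 (E × F),
        ⟪D₁ k.fst, k.fst⟫ + ⟪D₂ k.snd, k.snd⟫ ≤ ⟪T k, k⟫ + κ * ‖k‖ ^ 2 := by
  have hv0 : v₁ 0 = 0 ∧ v₂ 0 = 0 := by
    have hpair := gradient_eq_zero_of_le_half_inner_apply_self hT
      (hasGradientAt_add_fst_snd (z := 0) (h₁ 0) (h₂ 0)) h0 hle
    simpa using hpair
  have hnear₁ := (WithLp.fstL 2 ℝ E F).continuous.tendsto' 0 0 rfl |>.eventually <|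
    eventually_mem_nhds_and_mem_ball hv₁.continuous.continuousAt hv0.1 hK a hτ
  have hnear₂ := (WithLp.sndL 2 ℝ E F).continuous.tendsto' 0 0 rfl |>.eventually <|
    eventually_mem_nhds_and_mem_ball hv₂.continuous.continuousAt hv0.2 hL a hτ
  obtain ⟨s, hs, hball⟩ := Metric.eventually_nhds_iff.1 (hnear₁.and hnear₂)
  obtain ⟨z, D₁, D₂, hz, hD₁, hD₂, hD⟩ :=
    exists_hasFDerivAt_gradient_add_le hT h₁ h₂ hv₁ hv₂ h0 hle hκ hs
  obtain ⟨hx, hy⟩ := hball (by rwa [dist_zero_right])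
  exact ⟨z.fst, z.snd, D₁, D₂, hx, hy, hD₁, hD₂, hD⟩

end SumGradient

section MoreauEnvelope

variable {E : Type*} [NormedAddCommGroup E] [InnerProductSpace ℝ E]

/-- `p` is a (global) subgradient of `f` at `y`: the slope of an affine minorant of `f` that touches
it at `y`. -/
def HasSubgradientAt (f : E → ℝ) (p y : E) : Prop := ∀ z, f y + ⟪p, z - y⟫ ≤ f z

/-- The Moreau envelope of `f` with parameter `μ`. The infimum has its expected value as soon as
`f` has a subgradient at some point. -/
def moreauEnvelope (μ : ℝ) (f : E → ℝ) (ω : E) : ℝ := ⨅ y, f y + ‖ω - y‖ ^ 2 / (2 * μ)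

variable {f : E → ℝ} {p q y z ω : E} {μ : ℝ}

theorem HasSubgradientAt.add_smul_sub (hp : HasSubgradientAt f p y) (hq : HasSubgradientAt f q y)
    {t : ℝ} (ht : t ∈ Icc (0 : ℝ) 1) : HasSubgradientAt f (p + t • (q - p)) y := by
  intro z
  rw [inner_add_left, real_inner_smul_left, inner_sub_left]
  nlinarith [hp z, hq z, ht.1, ht.2]

theorem HasSubgradientAt.inner_sub_nonneg (hp : HasSubgradientAt f p y)
    (hq : HasSubgradientAt f q z) : 0 ≤ ⟪p - q, y - z⟫ := by
  have hyz := hp z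
  have hzy := hq y
  rw [← neg_sub y z, inner_neg_right] at hyz
  rw [inner_sub_left]
  linarith

theorem hasSubgradientAt_neg_of_forall_add_le [CompleteSpace E] {g : E → ℝ}
    (hf : ConvexOn ℝ univ f) (hg : HasGradientAt g q y) (hmin : ∀ z, f y + g y ≤ f z + g z) :
    HasSubgradientAt f (-q) y := by
  intro z
  have hline : HasDerivAt (fun t : ℝ => t * (f z - f y) + g (y + t • (z - y)))
      (f z - f y + ⟪q, z - y⟫) 0 := by
    have hray : HasDerivAt (fun t : ℝ => y + t • (z - y)) (z - y) 0 := by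
      simpa using ((hasDerivAt_id (0 : ℝ)).smul_const (z - y)).const_add y
    have hcomp := HasFDerivAt.comp_hasDerivAt (0 : ℝ)
      (by simpa using hg.hasFDerivAt : HasFDerivAt g _ (y + (0 : ℝ) • (z - y))) hray
    simpa using! ((hasDerivAt_id (0 : ℝ)).mul_const (f z - f y)).add hcomp
  have hmin0 : IsMinOn (fun t : ℝ => t * (f z - f y) + g (y + t • (z - y))) (Icc 0 1) 0 := by
    intro t ht
    have hconv := hf.2 (mem_univ y) (mem_univ z) (sub_nonneg.2 ht.2) ht.1 (sub_add_cancel 1 t)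
    have hpoint : (1 - t) • y + t • z = y + t • (z - y) := by module
    have hle := hmin (y + t • (z - y))
    rw [hpoint, smul_eq_mul, smul_eq_mul] at hconv
    simp only [mem_ofPred_eq, zero_mul, zero_smul, add_zero, zero_add]
    linarith
  have hnonneg : 0 ≤ f z - f y + ⟪q, z - y⟫ := by
    simpa using hmin0.localize.hasFDerivWithinAt_nonneg hline.hasFDerivAt.hasFDerivWithinAt
      (mem_posTangentConeAt_of_segment_subset (y := (1 : ℝ)) (by simp [segment_eq_Icc]))
  rw [inner_neg_left]
  linarith

theorem hasGradientAt_sq_norm_sub_div [CompleteSpace E] (μ : ℝ) (ω y : E) :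
    HasGradientAt (fun y => ‖ω - y‖ ^ 2 / (2 * μ)) (-(μ⁻¹ • (ω - y))) y := by
  have hsq := (((hasFDerivAt_id y).const_sub ω).norm_sq).mul_const (2 * μ)⁻¹
  refine hsq.congr_fderiv ?_
  ext k
  simp only [mul_inv_rev, id_eq, map_sub, ContinuousLinearMap.comp_neg,
    ContinuousLinearMap.comp_id, neg_sub, smul_apply, sub_apply, coe_innerSL_apply, nsmul_eq_mul,
    Nat.cast_ofNat, smul_eq_mul, map_neg, map_smul, neg_apply,
    InnerProductSpace.toDual_apply_apply]
  ring

theorem tendsto_inner_add_sq_norm_sub_div_cocompact [FiniteDimensional ℝ E] (hμ : 0 < μ)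
    (q ω : E) : Tendsto (fun y => ⟪q, y⟫ + ‖ω - y‖ ^ 2 / (2 * μ)) (cocompact E) atTop := by
  have hsquare : ∀ y, ⟪q, y⟫ + ‖ω - y‖ ^ 2 / (2 * μ) =
      ‖y - (ω - μ • q)‖ ^ 2 / (2 * μ) + (⟪q, ω⟫ - μ / 2 * ‖q‖ ^ 2) := fun y => by
    rw [show y - (ω - μ • q) = μ • q - (ω - y) by abel, norm_sub_sq_real (μ • q),
      real_inner_smul_left, inner_sub_right, norm_smul, mul_pow, Real.norm_eq_abs, sq_abs]
    field_simp
    ring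
  have hnorm : Tendsto (fun y => ‖y - (ω - μ • q)‖) (cocompact E) atTop :=
    tendsto_norm_cocompact_atTop.comp
      (Homeomorph.subRight (ω - μ • q)).isClosedEmbedding.tendsto_cocompact
  simp only [hsquare]
  exact tendsto_atTop_add_const_right _ _
    (((tendsto_pow_atTop two_ne_zero).comp hnorm).atTop_div_const (by positivity))

theorem exists_hasSubgradientAt_sub_smul [FiniteDimensional ℝ E] (hμ : 0 < μ)
    (hf : ConvexOn ℝ univ f) {b : ℝ} (hminor : ∀ y, ⟪q, y⟫ - b ≤ f y) (ω : E) :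
    ∃ p, HasSubgradientAt f p (ω - μ • p) := by
  have hcont : Continuous fun y => f y + ‖ω - y‖ ^ 2 / (2 * μ) :=
    hf.locallyLipschitz.continuous.add (by fun_prop)
  have hcoercive : Tendsto (fun y => f y + ‖ω - y‖ ^ 2 / (2 * μ)) (cocompact E) atTop :=
    tendsto_atTop_mono (fun y => by linarith [hminor y])
      (tendsto_atTop_add_const_right _ (-b) (tendsto_inner_add_sq_norm_sub_div_cocompact hμ q ω))
  obtain ⟨y, hy⟩ := hcont.exists_forall_le hcoercive
  refine ⟨μ⁻¹ • (ω - y), ?_⟩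
  have hprox := hasSubgradientAt_neg_of_forall_add_le hf (hasGradientAt_sq_norm_sub_div μ ω y) hy
  rwa [smul_inv_smul₀ hμ.ne', sub_sub_cancel, ← neg_neg (μ⁻¹ • (ω - y))]

theorem inner_sub_le_add_sq_norm_sub_div {b : ℝ} (hminor : ∀ y, ⟪q, y⟫ - b ≤ f y) (hμ : 0 < μ)
    (ω y : E) : ⟪q, ω⟫ - b - μ / 2 * ‖q‖ ^ 2 ≤ f y + ‖ω - y‖ ^ 2 / (2 * μ) := by
  have hsquare : μ / 2 * ‖q‖ ^ 2 - ⟪q, ω - y⟫ + ‖ω - y‖ ^ 2 / (2 * μ) =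
      ‖μ • q - (ω - y)‖ ^ 2 / (2 * μ) := by
    rw [norm_sub_sq_real (μ • q), real_inner_smul_left, norm_smul, mul_pow, Real.norm_eq_abs,
      sq_abs]
    field_simp
  have hnonneg : 0 ≤ ‖μ • q - (ω - y)‖ ^ 2 / (2 * μ) := by positivity
  rw [inner_sub_right] at hsquare
  linarith [hminor y]

theorem inner_sub_le_moreauEnvelope {b : ℝ} (hminor : ∀ y, ⟪q, y⟫ - b ≤ f y) (hμ : 0 < μ)
    (ω : E) : ⟪q, ω⟫ - b - μ / 2 * ‖q‖ ^ 2 ≤ moreauEnvelope μ f ω :=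
  le_ciInf (inner_sub_le_add_sq_norm_sub_div hminor hμ ω)

theorem moreauEnvelope_le {b : ℝ} (hminor : ∀ y, ⟪q, y⟫ - b ≤ f y) (hμ : 0 < μ) (ω y : E) :
    moreauEnvelope μ f ω ≤ f y + ‖ω - y‖ ^ 2 / (2 * μ) :=
  ciInf_le ⟨_, forall_mem_range.2 (inner_sub_le_add_sq_norm_sub_div hminor hμ ω)⟩ y

theorem HasSubgradientAt.inner_sub_le (hp : HasSubgradientAt f p y) (z : E) :
    ⟪p, z⟫ - (⟪p, y⟫ - f y) ≤ f z := by
  have hz := hp z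
  rw [inner_sub_right] at hz
  linarith

theorem HasSubgradientAt.le_moreauEnvelope (hp : HasSubgradientAt f p y) (hμ : 0 < μ) (ω : E) :
    f y + ⟪p, ω - y⟫ - μ / 2 * ‖p‖ ^ 2 ≤ moreauEnvelope μ f ω := by
  rw [inner_sub_right]
  linarith [inner_sub_le_moreauEnvelope hp.inner_sub_le hμ ω]

theorem moreauEnvelope_eq (hμ : 0 < μ) (hp : HasSubgradientAt f p (ω - μ • p)) :
    moreauEnvelope μ f ω = f (ω - μ • p) + μ / 2 * ‖p‖ ^ 2 := by
  refine le_antisymm ((moreauEnvelope_le hp.inner_sub_le hμ ω (ω - μ • p)).trans_eq ?_)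
    (le_of_eq_of_le ?_ (hp.le_moreauEnvelope hμ ω))
  · rw [sub_sub_cancel, norm_smul, mul_pow, Real.norm_eq_abs, sq_abs]
    field_simp
  · rw [sub_sub_cancel, real_inner_smul_right, real_inner_self_eq_norm_sq]
    ring

theorem hasSubgradientAt_moreauEnvelope (hμ : 0 < μ) (hp : HasSubgradientAt f p (ω - μ • p)) :
    HasSubgradientAt (moreauEnvelope μ f) p ω := by
  intro ω'
  have hle := hp.le_moreauEnvelope hμ ω'
  rw [← sub_add, inner_add_right, real_inner_smul_right, real_inner_self_eq_norm_sq] at hle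
  rw [moreauEnvelope_eq hμ hp]
  linarith

theorem moreauEnvelope_le_quadratic (hμ : 0 < μ) (hp : HasSubgradientAt f p (ω - μ • p)) (ω' : E) :
    moreauEnvelope μ f ω' ≤
      moreauEnvelope μ f ω + ⟪p, ω' - ω⟫ + ‖ω' - ω‖ ^ 2 / (2 * μ) := by
  have hle := moreauEnvelope_le hp.inner_sub_le hμ ω' (ω - μ • p)
  rw [← sub_add, norm_add_sq_real, real_inner_smul_right, norm_smul, mul_pow, Real.norm_eq_abs,
    sq_abs, real_inner_comm] at hle
  rw [moreauEnvelope_eq hμ hp]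
  refine hle.trans_eq ?_
  field_simp
  ring

theorem hasGradientAt_moreauEnvelope [CompleteSpace E] (hμ : 0 < μ)
    (hp : HasSubgradientAt f p (ω - μ • p)) : HasGradientAt (moreauEnvelope μ f) p ω := by
  have hbigO : (fun ω' => moreauEnvelope μ f ω' - moreauEnvelope μ f ω - ⟪p, ω' - ω⟫) =O[𝓝 ω]
      fun ω' => ‖ω' - ω‖ ^ 2 := by
    refine .of_bound (1 / (2 * μ)) (.of_forall fun ω' => ?_)
    have hlower := hasSubgradientAt_moreauEnvelope hμ hp ω'
    have hupper := moreauEnvelope_le_quadratic hμ hp ω'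
    rw [Real.norm_of_nonneg (by linarith), Real.norm_of_nonneg (by positivity)]
    linarith [one_div_mul_eq_div (2 * μ) (‖ω' - ω‖ ^ 2)]
  exact HasFDerivAt.of_isLittleO (hbigO.trans_isLittleO (isLittleO_pow_sub_sub ω one_lt_two))

theorem lipschitzWith_of_hasSubgradientAt_sub_smul (hμ : 0 < μ) {v : E → E}
    (hv : ∀ ω, HasSubgradientAt f (v ω) (ω - μ • v ω)) : LipschitzWith (Real.toNNReal μ⁻¹) v := by
  refine .of_dist_le_mul fun ω ω' => ?_
  rw [dist_eq_norm, dist_eq_norm, Real.coe_toNNReal _ (inv_nonneg.2 hμ.le), inv_mul_eq_div,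
    le_div_iff₀' hμ]
  rcases (norm_nonneg (v ω - v ω')).eq_or_lt with hzero | hpos
  · simp [← hzero]
  have hmono := (hv ω).inner_sub_nonneg (hv ω')
  rw [show ω - μ • v ω - (ω' - μ • v ω') = (ω - ω') - μ • (v ω - v ω') by module, inner_sub_right,
    real_inner_smul_right, real_inner_self_eq_norm_sq] at hmono
  have hcs := real_inner_le_norm (v ω - v ω') (ω - ω')
  refine le_of_mul_le_mul_left ?_ hpos
  linarith

/-- At a second subgradient `q` the affine minorants with slopes `p + t • (q - p)`, `t ∈ [0, 1]`,
would make the envelope grow like `‖k‖ ^ 2 / (2 * μ)` in the direction `q - p`. -/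
theorem HasSubgradientAt.eq_of_moreauEnvelope_le {c : ℝ} (hμ : 0 < μ) (hc : c < μ⁻¹)
    (hp : HasSubgradientAt f p (ω - μ • p)) (hq : HasSubgradientAt f q (ω - μ • p))
    (hle : ∀ᶠ k in 𝓝 0,
      moreauEnvelope μ f (ω + k) ≤ moreauEnvelope μ f ω + ⟪p, k⟫ + c / 2 * ‖k‖ ^ 2) : q = p := by
  have hray : Tendsto (fun t : ℝ => (t * μ) • (q - p)) (𝓝[>] 0) (𝓝 0) :=
    ((by fun_prop : Continuous fun t : ℝ => (t * μ) • (q - p)).tendsto' 0 0 (by simp)).mono_left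
      nhdsWithin_le_nhds
  obtain ⟨t, hlet, ht0, ht1⟩ :=
    ((hray.eventually hle).and (Ioc_mem_nhdsGT (zero_lt_one' ℝ))).exists
  have hlower := (hp.add_smul_sub hq ⟨ht0.le, ht1⟩).le_moreauEnvelope hμ (ω + (t * μ) • (q - p))
  rw [moreauEnvelope_eq hμ hp] at hlet
  have hnorm : t ^ 2 * μ * ‖q - p‖ ^ 2 ≤ t ^ 2 * μ * (c * μ * ‖q - p‖ ^ 2) := by
    rw [show ω + (t * μ) • (q - p) - (ω - μ • p) = μ • (p + t • (q - p)) by module,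
      real_inner_smul_right, real_inner_self_eq_norm_sq] at hlower
    rw [norm_add_sq_real, norm_smul, real_inner_smul_right, mul_pow, Real.norm_eq_abs, sq_abs]
      at hlower
    rw [real_inner_smul_right, norm_smul, mul_pow, Real.norm_eq_abs, sq_abs] at hlet
    nlinarith
  have hcμ : c * μ < 1 := (lt_inv_mul_iff₀' hμ).1 (by simpa using hc)
  have hle0 := le_of_mul_le_mul_left hnorm (by positivity)
  have hzero : ‖q - p‖ ^ 2 = 0 := by nlinarith [sq_nonneg ‖q - p‖]
  exact sub_eq_zero.1 (norm_eq_zero.1 (pow_eq_zero_iff two_ne_zero |>.1 hzero))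

end MoreauEnvelope

section Conjugate

variable {E : Type*} [NormedAddCommGroup E] [InnerProductSpace ℝ E]

/-- The convex conjugate of the restriction of `g` to `K`. The supremum is attained when `K` is
nonempty and compact and `g` is lower semicontinuous on `K`. -/
def conjugateOn (K : Set E) (g : E → ℝ) (y : E) : ℝ := ⨆ x : K, (⟪(x : E), y⟫ - g x)

variable {K : Set E} {g : E → ℝ}

theorem exists_isGreatest_conjugateOn (hK : IsCompact K) (hne : K.Nonempty)
    (hg : LowerSemicontinuousOn g K) (y : E) :
    IsGreatest ((fun x => ⟪x, y⟫ - g x) '' K) (conjugateOn K g y) := by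
  have husc : UpperSemicontinuousOn (fun x => ⟪x, y⟫ - g x) K := by
    simp only [sub_eq_add_neg]
    exact (by fun_prop : Continuous fun x => ⟪x, y⟫).continuousOn.upperSemicontinuousOn.add hg.neg
  obtain ⟨x, hx, hmax⟩ := husc.exists_isMaxOn hne hK
  have hgreatest : IsGreatest ((fun x => ⟪x, y⟫ - g x) '' K) (⟪x, y⟫ - g x) :=
    ⟨mem_image_of_mem _ hx, forall_mem_image.2 hmax⟩
  have heq : conjugateOn K g y = ⟪x, y⟫ - g x := by
    rw [conjugateOn, ← hgreatest.csSup_eq, sSup_image']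
  rwa [heq]

theorem exists_mem_conjugateOn_eq (hK : IsCompact K) (hne : K.Nonempty)
    (hg : LowerSemicontinuousOn g K) (y : E) : ∃ x ∈ K, conjugateOn K g y = ⟪x, y⟫ - g x := by
  obtain ⟨x, hx, hxy⟩ := (exists_isGreatest_conjugateOn hK hne hg y).1
  exact ⟨x, hx, hxy.symm⟩

theorem inner_sub_le_conjugateOn (hK : IsCompact K) (hg : LowerSemicontinuousOn g K) {x : E}
    (hx : x ∈ K) (y : E) : ⟪x, y⟫ - g x ≤ conjugateOn K g y :=
  (exists_isGreatest_conjugateOn hK ⟨x, hx⟩ hg y).2 (mem_image_of_mem _ hx)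

theorem convexOn_conjugateOn (hK : IsCompact K) (hne : K.Nonempty)
    (hg : LowerSemicontinuousOn g K) : ConvexOn ℝ univ (conjugateOn K g) := by
  refine ⟨convex_univ, fun y _ z _ a b ha hb hab => ?_⟩
  obtain ⟨x, hx, hxyz⟩ := exists_mem_conjugateOn_eq hK hne hg (a • y + b • z)
  calc conjugateOn K g (a • y + b • z) = a * (⟪x, y⟫ - g x) + b * (⟪x, z⟫ - g x) := by
        rw [hxyz, inner_add_right, real_inner_smul_right, real_inner_smul_right]
        linear_combination g x * hab
    _ ≤ a • conjugateOn K g y + b • conjugateOn K g z := by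
        rw [smul_eq_mul, smul_eq_mul]
        gcongr <;> exact inner_sub_le_conjugateOn hK hg hx _

theorem hasSubgradientAt_conjugateOn (hK : IsCompact K) (hg : LowerSemicontinuousOn g K) {x y : E}
    (hx : x ∈ K) (hxy : conjugateOn K g y = ⟪x, y⟫ - g x) :
    HasSubgradientAt (conjugateOn K g) x y := by
  intro z
  rw [hxy, inner_sub_right]
  linarith [inner_sub_le_conjugateOn hK hg hx z]

theorem exists_hasSubgradientAt_conjugateOn [FiniteDimensional ℝ E] (hK : IsCompact K)
    (hne : K.Nonempty) (hg : LowerSemicontinuousOn g K) {μ : ℝ} (hμ : 0 < μ) (ω : E) :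
    ∃ p, HasSubgradientAt (conjugateOn K g) p (ω - μ • p) := by
  obtain ⟨x, hx⟩ := hne
  exact exists_hasSubgradientAt_sub_smul hμ (convexOn_conjugateOn hK ⟨x, hx⟩ hg)
    (inner_sub_le_conjugateOn hK hg hx) ω

theorem mem_and_eq_of_moreauEnvelope_conjugateOn_le (hK : IsCompact K) (hne : K.Nonempty)
    (hg : LowerSemicontinuousOn g K) {μ c : ℝ} (hμ : 0 < μ) (hc : c < μ⁻¹) {p ω : E}
    (hp : HasSubgradientAt (conjugateOn K g) p (ω - μ • p))
    (hle : ∀ᶠ k in 𝓝 0, moreauEnvelope μ (conjugateOn K g) (ω + k) ≤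
      moreauEnvelope μ (conjugateOn K g) ω + ⟪p, k⟫ + c / 2 * ‖k‖ ^ 2) :
    p ∈ K ∧ moreauEnvelope μ (conjugateOn K g) ω = ⟪p, ω⟫ - g p - μ / 2 * ‖p‖ ^ 2 := by
  obtain ⟨x, hx, hxω⟩ := exists_mem_conjugateOn_eq hK hne hg (ω - μ • p)
  obtain rfl : x = p :=
    hp.eq_of_moreauEnvelope_le hμ hc (hasSubgradientAt_conjugateOn hK hg hx hxω) hle
  refine ⟨hx, ?_⟩
  rw [moreauEnvelope_eq hμ hp, hxω, inner_sub_right, real_inner_smul_right,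
    real_inner_self_eq_norm_sq]
  ring

end Conjugate

section Superjet

variable {E : Type*} [NormedAddCommGroup E] [InnerProductSpace ℝ E]

/-- The second-order superjet of `u` at `x`: the pairs `(p, X)` with `X` symmetric and
`u (x + h) ≤ u x + ⟪p, h⟫ + ⟪X h, h⟫ / 2 + o(‖h‖ ^ 2)` as `h → 0`. -/
def superjet (u : E → ℝ) (x : E) : Set (E × (E →L[ℝ] E)) :=
  {j | (j.2 : E →ₗ[ℝ] E).IsSymmetric ∧ ∀ τ > 0, ∀ᶠ h in 𝓝 0,
    u (x + h) ≤ u x + ⟪j.1, h⟫ + 1 / 2 * ⟪j.2 h, h⟫ + τ * ‖h‖ ^ 2}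

/-- The limits of superjets of `u` at points converging to `x`. Convergence of the values of `u` at
these points is not required. -/
def closedSuperjet (u : E → ℝ) (x : E) : Set (E × (E →L[ℝ] E)) :=
  {j | (x, j) ∈ closure {y : E × E × (E →L[ℝ] E) | y.2 ∈ superjet u y.1}}

end Superjet

section SupConjugate

theorem lowerSemicontinuousOn_sq_sub {E : Type*} [SeminormedAddCommGroup E] {K : Set E} {u : E → ℝ}
    (hu : UpperSemicontinuousOn u K) (lam : ℝ) :
    LowerSemicontinuousOn (fun x => lam / 2 * ‖x‖ ^ 2 - u x) K := by
  have hsq : Continuous fun x : E => lam / 2 * ‖x‖ ^ 2 := by fun_prop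
  simp only [sub_eq_add_neg]
  exact hsq.continuousOn.lowerSemicontinuousOn.add hu.neg

variable {E : Type*} [NormedAddCommGroup E] [InnerProductSpace ℝ E] {K : Set E} {u : E → ℝ}
  {lam μ : ℝ}

/-- The conjugate `ω ↦ max_{x ∈ K} (⟪x, ω⟫ - lam / 2 * ‖x‖ ^ 2 + u x)`. At `ω = lam • η` it is the
sup-convolution `max_{x ∈ K} (u x - lam / 2 * ‖x - η‖ ^ 2)` plus `lam / 2 * ‖η‖ ^ 2`. -/
abbrev supConjugate (K : Set E) (lam : ℝ) (u : E → ℝ) : E → ℝ :=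
  conjugateOn K fun x => lam / 2 * ‖x‖ ^ 2 - u x

theorem exists_hasSubgradientAt_supConjugate [FiniteDimensional ℝ E] (hK : IsCompact K)
    (hne : K.Nonempty) (hu : UpperSemicontinuousOn u K) (hμ : 0 < μ) (lam : ℝ) :
    ∃ v : E → E, ∀ ω, HasSubgradientAt (supConjugate K lam u) (v ω) (ω - μ • v ω) :=
  ⟨_, fun ω => (exists_hasSubgradientAt_conjugateOn hK hne
    (lowerSemicontinuousOn_sq_sub hu lam) hμ ω).choose_spec⟩

theorem le_sq_sub_inner_add_moreauEnvelope (hK : IsCompact K) (hu : UpperSemicontinuousOn u K)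
    (hμ : 0 < μ) {x : E} (hx : x ∈ K) (ω : E) :
    u x ≤ (lam + μ) / 2 * ‖x‖ ^ 2 - ⟪x, ω⟫ + moreauEnvelope μ (supConjugate K lam u) ω := by
  linarith [inner_sub_le_moreauEnvelope
    (inner_sub_le_conjugateOn hK (lowerSemicontinuousOn_sq_sub hu lam) hx) hμ ω]

theorem inner_apply_self_nonneg_of_hasSubgradientAt [CompleteSpace E] {f : E → ℝ} (hμ : 0 < μ)
    {v : E → E} (hv : ∀ ω, HasSubgradientAt f (v ω) (ω - μ • v ω)) {ω : E} {D : E →L[ℝ] E}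
    (hD : HasFDerivAt v D ω) (k : E) : 0 ≤ ⟪D k, k⟫ := by
  have hgrad : ∀ ω, HasGradientAt (fun ω => -moreauEnvelope μ f ω) (-v ω) ω := fun ω => by
    rw [hasGradientAt_iff_hasFDerivAt, map_neg]
    exact (hasGradientAt_moreauEnvelope hμ (hv ω)).hasFDerivAt.fun_neg
  have hmax : IsLocalMax (fun y => -moreauEnvelope μ f y - ⟪-v ω, y⟫) ω := .of_forall fun y => by
    have hle := hasSubgradientAt_moreauEnvelope hμ (hv ω) y
    rw [inner_sub_right] at hle
    simp only [inner_neg_left]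
    linarith
  have hnonpos := inner_apply_self_nonpos_of_isLocalMax (.of_forall hgrad) hD.fun_neg hmax k
  rwa [neg_apply, inner_neg_left, neg_nonpos] at hnonpos

/-- Translating `x` by `h` and `ω` by `lam • h` in the Young inequality, an equality at
`x = v ω`, turns the expansion of the envelope at `ω` into an upper expansion of `u` at `x`. -/
theorem mem_superjet_of_hasFDerivAt [CompleteSpace E] (hK : IsCompact K)
    (hu : UpperSemicontinuousOn u K) (hμ : 0 < μ) {v : E → E}
    (hv : ∀ ω, HasSubgradientAt (supConjugate K lam u) (v ω) (ω - μ • v ω)) {ω : E}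
    {D : E →L[ℝ] E} (hD : HasFDerivAt v D ω) {c : ℝ} (hc : c < μ⁻¹)
    (hDc : ∀ k, ⟪D k, k⟫ ≤ c * ‖k‖ ^ 2) (hKω : K ∈ 𝓝 (v ω)) :
    ((lam + μ) • v ω - ω, lam ^ 2 • D + (μ - lam) • (1 : E →L[ℝ] E)) ∈ superjet u (v ω) := by
  have hgrad : ∀ᶠ y in 𝓝 ω, HasGradientAt (moreauEnvelope μ (supConjugate K lam u)) (v y) y :=
    .of_forall fun y => hasGradientAt_moreauEnvelope hμ (hv y)
  have hDsymm := isSymmetric_of_hasFDerivAt_gradient hgrad hD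
  have htaylor := eventually_le_taylor_two_of_hasGradientAt hgrad hD
  have hcontact := (mem_and_eq_of_moreauEnvelope_conjugateOn_le hK ⟨_, mem_of_mem_nhds hKω⟩
    (lowerSemicontinuousOn_sq_sub hu lam) hμ (by linarith : (c + μ⁻¹) / 2 < μ⁻¹) (hv ω)
    ((htaylor ((μ⁻¹ - c) / 4) (by linarith)).mono fun k hk => by linarith [hDc k])).2
  refine ⟨isSymmetric_add_smul_one (hDsymm.smul (c := lam ^ 2) rfl) _, fun τ hτ => ?_⟩
  have hscale : Tendsto (lam • · : E → E) (𝓝 0) (𝓝 0) :=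
    (continuous_const_smul lam).tendsto' 0 0 (smul_zero lam)
  have hshift : Tendsto (v ω + ·) (𝓝 0) (𝓝 (v ω)) :=
    (continuous_const_add (v ω)).tendsto' 0 _ (add_zero _)
  filter_upwards [hscale.eventually (htaylor (τ / (lam ^ 2 + 1)) (by positivity)),
    hshift.eventually hKω] with h hh hhK
  have hyoung := le_sq_sub_inner_add_moreauEnvelope (lam := lam) hK hu hμ hhK (ω + lam • h)
  have hτle : τ / (lam ^ 2 + 1) * (lam ^ 2 * ‖h‖ ^ 2) ≤ τ * ‖h‖ ^ 2 := by
    rw [div_mul_eq_mul_div, div_le_iff₀ (by positivity)]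
    nlinarith [mul_nonneg hτ.le (sq_nonneg ‖h‖)]
  simp only [map_smul, real_inner_smul_left, real_inner_smul_right, norm_smul, mul_pow,
    Real.norm_eq_abs, sq_abs] at hh
  rw [norm_add_sq_real, inner_add_left, inner_add_right, inner_add_right, real_inner_smul_right,
    real_inner_smul_right, real_inner_self_eq_norm_sq] at hyoung
  simp only [inner_sub_left, inner_add_smul_one_apply_self, smul_apply, real_inner_smul_left,
    real_inner_comm h ω]
  linarith

end SupConjugate

section ApproximateSums

variable {E F : Type*} [NormedAddCommGroup E] [InnerProductSpace ℝ E] [NormedAddCommGroup F]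
  [InnerProductSpace ℝ F] {K : Set E} {L : Set F} {u : E → ℝ} {w : F → ℝ} {lam μ τ : ℝ}
  {B : WithLp 2 (E × F) →L[ℝ] WithLp 2 (E × F)}

theorem supConjugate_add_le (hK : IsCompact K) (hL : IsCompact L) (hKne : K.Nonempty)
    (hLne : L.Nonempty) (hu : UpperSemicontinuousOn u K) (hw : UpperSemicontinuousOn w L)
    (hlam : 0 < lam)
    (hle : ∀ x ∈ K, ∀ y ∈ L, ∀ η : WithLp 2 (E × F),
      u x + w y ≤ 1 / 2 * ⟪B η, η⟫ + lam / 2 * ‖WithLp.toLp 2 (x, y) - η‖ ^ 2)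
    (ω : WithLp 2 (E × F)) :
    supConjugate K lam u ω.fst + supConjugate L lam w ω.snd ≤
      1 / 2 * (lam⁻¹ ^ 2 * ⟪B ω, ω⟫ + lam⁻¹ * ‖ω‖ ^ 2) := by
  obtain ⟨x, hx, hxω⟩ :=
    exists_mem_conjugateOn_eq hK hKne (lowerSemicontinuousOn_sq_sub hu lam) ω.fst
  obtain ⟨y, hy, hyω⟩ :=
    exists_mem_conjugateOn_eq hL hLne (lowerSemicontinuousOn_sq_sub hw lam) ω.snd
  have hxy := hle x hx y hy (lam⁻¹ • ω)
  have hinner : ⟪WithLp.toLp 2 (x, y), ω⟫ = ⟪x, ω.fst⟫ + ⟪y, ω.snd⟫ := WithLp.prod_inner_apply _ _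
  have hnorm : ‖WithLp.toLp 2 (x, y)‖ ^ 2 = ‖x‖ ^ 2 + ‖y‖ ^ 2 := WithLp.prod_norm_sq_eq_of_L2 _
  rw [norm_sub_sq_real, hnorm, map_smul, real_inner_smul_left, real_inner_smul_right,
    real_inner_smul_right, hinner, norm_smul, mul_pow, Real.norm_eq_abs, sq_abs] at hxy
  rw [supConjugate, supConjugate, hxω, hyω]
  refine le_of_sub_nonneg ((sub_nonneg.2 hxy).trans_eq ?_)
  field_simp
  ring

theorem moreauEnvelope_supConjugate_add_le (hK : IsCompact K) (hL : IsCompact L)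
    (hKne : K.Nonempty) (hLne : L.Nonempty) (hu : UpperSemicontinuousOn u K)
    (hw : UpperSemicontinuousOn w L) (hlam : 0 < lam) (hμ : 0 < μ)
    (hle : ∀ x ∈ K, ∀ y ∈ L, ∀ η : WithLp 2 (E × F),
      u x + w y ≤ 1 / 2 * ⟪B η, η⟫ + lam / 2 * ‖WithLp.toLp 2 (x, y) - η‖ ^ 2)
    (ω : WithLp 2 (E × F)) :
    moreauEnvelope μ (supConjugate K lam u) ω.fst + moreauEnvelope μ (supConjugate L lam w) ω.snd ≤
      1 / 2 * (lam⁻¹ ^ 2 * ⟪B ω, ω⟫ + lam⁻¹ * ‖ω‖ ^ 2) := by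
  refine le_trans (add_le_add ?_ ?_) (supConjugate_add_le hK hL hKne hLne hu hw hlam hle ω)
  · obtain ⟨x, hx⟩ := hKne
    simpa using moreauEnvelope_le
      (inner_sub_le_conjugateOn hK (lowerSemicontinuousOn_sq_sub hu lam) hx) hμ ω.fst ω.fst
  · obtain ⟨y, hy⟩ := hLne
    simpa using moreauEnvelope_le
      (inner_sub_le_conjugateOn hL (lowerSemicontinuousOn_sq_sub hw lam) hy) hμ ω.snd ω.snd

theorem moreauEnvelope_supConjugate_add_nonneg (hK : IsCompact K) (hL : IsCompact L)
    (hK0 : 0 ∈ K) (hL0 : 0 ∈ L) (hu : UpperSemicontinuousOn u K) (hw : UpperSemicontinuousOn w L)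
    (hμ : 0 < μ) (h0 : 0 ≤ u 0 + w 0) :
    0 ≤ moreauEnvelope μ (supConjugate K lam u) 0 + moreauEnvelope μ (supConjugate L lam w) 0 := by
  have hu0 := le_sq_sub_inner_add_moreauEnvelope (lam := lam) hK hu hμ hK0 0
  have hw0 := le_sq_sub_inner_add_moreauEnvelope (lam := lam) hL hw hμ hL0 0
  rw [norm_zero, inner_zero_left] at hu0 hw0
  linarith

theorem inner_smul_add_smul_one_fst_add_snd (D₁ : E →L[ℝ] E) (D₂ : F →L[ℝ] F) (a b : ℝ)
    (k : WithLp 2 (E × F)) :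
    ⟪(a • D₁ + b • (1 : E →L[ℝ] E)) k.fst, k.fst⟫ +
        ⟪(a • D₂ + b • (1 : F →L[ℝ] F)) k.snd, k.snd⟫ =
      a * (⟪D₁ k.fst, k.fst⟫ + ⟪D₂ k.snd, k.snd⟫) + b * ‖k‖ ^ 2 := by
  rw [inner_add_smul_one_apply_self, inner_add_smul_one_apply_self, smul_apply, smul_apply,
    real_inner_smul_left, real_inner_smul_left, WithLp.prod_norm_sq_eq_of_L2]
  ring

theorem inner_smul_add_smul_one_bounds {D₁ : E →L[ℝ] E} {D₂ : F →L[ℝ] F} (hlam : 0 < lam)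
    (hμ : 0 ≤ μ) (hμτ : μ ≤ τ / 2) {k : WithLp 2 (E × F)} (h₁ : 0 ≤ ⟪D₁ k.fst, k.fst⟫)
    (h₂ : 0 ≤ ⟪D₂ k.snd, k.snd⟫)
    (hle : ⟪D₁ k.fst, k.fst⟫ + ⟪D₂ k.snd, k.snd⟫ ≤
      lam⁻¹ ^ 2 * ⟪B k, k⟫ + lam⁻¹ * ‖k‖ ^ 2 + τ / (2 * lam ^ 2) * ‖k‖ ^ 2) :
    -(lam * ‖k‖ ^ 2) ≤ ⟪(lam ^ 2 • D₁ + (μ - lam) • (1 : E →L[ℝ] E)) k.fst, k.fst⟫ +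
        ⟪(lam ^ 2 • D₂ + (μ - lam) • (1 : F →L[ℝ] F)) k.snd, k.snd⟫ ∧
      ⟪(lam ^ 2 • D₁ + (μ - lam) • (1 : E →L[ℝ] E)) k.fst, k.fst⟫ +
        ⟪(lam ^ 2 • D₂ + (μ - lam) • (1 : F →L[ℝ] F)) k.snd, k.snd⟫ ≤
      ⟪B k, k⟫ + τ * ‖k‖ ^ 2 := by
  rw [inner_smul_add_smul_one_fst_add_snd]
  constructor
  · nlinarith [mul_nonneg (sq_nonneg lam) (add_nonneg h₁ h₂), mul_nonneg hμ (sq_nonneg ‖k‖)]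
  · calc _ ≤ lam ^ 2 * (lam⁻¹ ^ 2 * ⟪B k, k⟫ + lam⁻¹ * ‖k‖ ^ 2 + τ / (2 * lam ^ 2) * ‖k‖ ^ 2) +
          (μ - lam) * ‖k‖ ^ 2 := by grw [hle]
      _ = ⟪B k, k⟫ + (τ / 2 + μ) * ‖k‖ ^ 2 := by
        field_simp
        ring
      _ ≤ ⟪B k, k⟫ + τ * ‖k‖ ^ 2 := by
        gcongr
        linarith

theorem exists_mem_superjet_add_le [FiniteDimensional ℝ E] [FiniteDimensional ℝ F]
    (hK : IsCompact K) (hL : IsCompact L) (hK0 : K ∈ 𝓝 0) (hL0 : L ∈ 𝓝 0)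
    (hu : UpperSemicontinuousOn u K) (hw : UpperSemicontinuousOn w L) (h0 : 0 ≤ u 0 + w 0)
    (hlam : 0 < lam) (hB : (B : WithLp 2 (E × F) →ₗ[ℝ] WithLp 2 (E × F)).IsSymmetric)
    (hle : ∀ x ∈ K, ∀ y ∈ L, ∀ η : WithLp 2 (E × F),
      u x + w y ≤ 1 / 2 * ⟪B η, η⟫ + lam / 2 * ‖WithLp.toLp 2 (x, y) - η‖ ^ 2)
    (hτ : 0 < τ) :
    ∃ (x p : E) (y q : F) (X : E →L[ℝ] E) (Y : F →L[ℝ] F),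
      (x, p) ∈ ball (0 : E × E) τ ∧ (y, q) ∈ ball (0 : F × F) τ ∧
      (p, X) ∈ superjet u x ∧ (q, Y) ∈ superjet w y ∧
      ∀ k : WithLp 2 (E × F), -(lam * ‖k‖ ^ 2) ≤ ⟪X k.fst, k.fst⟫ + ⟪Y k.snd, k.snd⟫ ∧
        ⟪X k.fst, k.fst⟫ + ⟪Y k.snd, k.snd⟫ ≤ ⟪B k, k⟫ + τ * ‖k‖ ^ 2 := by
  have hK0mem := mem_of_mem_nhds hK0
  have hL0mem := mem_of_mem_nhds hL0
  set T : WithLp 2 (E × F) →L[ℝ] WithLp 2 (E × F) := lam⁻¹ ^ 2 • B + lam⁻¹ • 1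
  have hTinner k : ⟪T k, k⟫ = lam⁻¹ ^ 2 * ⟪B k, k⟫ + lam⁻¹ * ‖k‖ ^ 2 := by
    rw [inner_add_smul_one_apply_self, smul_apply, real_inner_smul_left]
  set κ : ℝ := τ / (2 * lam ^ 2)
  have hκ : 0 < κ := by positivity
  obtain ⟨μ, hμinv, hμ, hμτ⟩ := ((tendsto_inv_nhdsGT_zero.eventually_gt_atTop (‖T‖ + κ)).and
    (Ioc_mem_nhdsGT (half_pos hτ))).exists
  obtain ⟨v₁, hv₁⟩ := exists_hasSubgradientAt_supConjugate hK ⟨0, hK0mem⟩ hu hμ lam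
  obtain ⟨v₂, hv₂⟩ := exists_hasSubgradientAt_supConjugate hL ⟨0, hL0mem⟩ hw hμ lam
  obtain ⟨ω₁, ω₂, D₁, D₂, ⟨hKω, hxp⟩, ⟨hLω, hyq⟩, hD₁, hD₂, hD⟩ :=
    exists_hasFDerivAt_gradient_add_le_of_mem_nhds
      (isSymmetric_add_smul_one (hB.smul (c := lam⁻¹ ^ 2) rfl) lam⁻¹)
      (fun ω => hasGradientAt_moreauEnvelope hμ (hv₁ ω))
      (fun ω => hasGradientAt_moreauEnvelope hμ (hv₂ ω))
      (lipschitzWith_of_hasSubgradientAt_sub_smul hμ hv₁)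
      (lipschitzWith_of_hasSubgradientAt_sub_smul hμ hv₂)
      (moreauEnvelope_supConjugate_add_nonneg hK hL hK0mem hL0mem hu hw hμ h0)
      (fun ω => hTinner ω ▸
        moreauEnvelope_supConjugate_add_le hK hL ⟨0, hK0mem⟩ ⟨0, hL0mem⟩ hu hw hlam hμ hle ω)
      hK0 hL0 (lam + μ) hκ hτ
  have hDnorm (k : WithLp 2 (E × F)) :
      ⟪D₁ k.fst, k.fst⟫ + ⟪D₂ k.snd, k.snd⟫ ≤ (‖T‖ + κ) * ‖k‖ ^ 2 := by
    linarith [hD k, inner_apply_self_le_opNorm_mul_sq T k]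
  refine ⟨_, _, _, _, _, _, hxp, hyq,
    mem_superjet_of_hasFDerivAt hK hu hμ hv₁ hD₁ hμinv (fun k => ?_) hKω,
    mem_superjet_of_hasFDerivAt hL hw hμ hv₂ hD₂ hμinv (fun k => ?_) hLω,
    fun k => inner_smul_add_smul_one_bounds hlam hμ.le hμτ
      (inner_apply_self_nonneg_of_hasSubgradientAt hμ hv₁ hD₁ k.fst)
      (inner_apply_self_nonneg_of_hasSubgradientAt hμ hv₂ hD₂ k.snd) (hTinner k ▸ hD k)⟩
  · simpa using hDnorm (WithLp.toLp 2 (k, 0))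
  · simpa using hDnorm (WithLp.toLp 2 (0, k))

end ApproximateSums

section TheoremOnSums

variable {E F : Type*} [NormedAddCommGroup E] [InnerProductSpace ℝ E] [NormedAddCommGroup F]
  [InnerProductSpace ℝ F] {u : E → ℝ} {w : F → ℝ} {T : E →L[ℝ] E}

theorem inner_apply_self_le_add_sq_norm_sub (hT : (T : E →ₗ[ℝ] E).IsSymmetric) {ε : ℝ}
    (hε : 0 < ε) (z y : E) :
    ⟪T z, z⟫ ≤ ⟪(T + ε • (T * T)) y, y⟫ + (1 / ε + ‖T‖) * ‖z - y‖ ^ 2 := by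
  obtain ⟨k, rfl⟩ : ∃ k, z = y + k := ⟨z - y, by abel⟩
  have hsymm : ⟪T k, y⟫ = ⟪T y, k⟫ := (hT k y).trans (real_inner_comm _ _)
  have hsq : ⟪T (T y), y⟫ = ‖T y‖ ^ 2 := (hT (T y) y).trans (real_inner_self_eq_norm_sq _)
  have hyoung : 2 * ⟪T y, k⟫ ≤ ε * ‖T y‖ ^ 2 + 1 / ε * ‖k‖ ^ 2 := by
    have hnonneg : 0 ≤ ε⁻¹ * ‖ε • T y - k‖ ^ 2 := by positivity
    rw [norm_sub_sq_real, norm_smul, mul_pow, Real.norm_eq_abs, sq_abs, real_inner_smul_left]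
      at hnonneg
    refine le_of_sub_nonneg (hnonneg.trans_eq ?_)
    field_simp
    ring
  rw [add_sub_cancel_left, map_add, inner_add_left, inner_add_right, inner_add_right, hsymm,
    add_apply, smul_apply, inner_add_left, real_inner_smul_left, mul_apply_eq_comp, hsq]
  linarith [inner_apply_self_le_opNorm_mul_sq T k]

theorem mem_superjet_of_mem_superjet_sub_inner {a p x₀ x : E} {X : E →L[ℝ] E} {c : ℝ}
    (h : (p, X) ∈ superjet (fun x => u (x₀ + x) - c - ⟪a, x⟫) x) :
    (a + p, X) ∈ superjet u (x₀ + x) := by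
  refine ⟨h.1, fun τ hτ => (h.2 τ hτ).mono fun k hk => ?_⟩
  simp only [inner_add_right, ← add_assoc] at hk
  simp only [inner_add_left]
  linarith

theorem upperSemicontinuousOn_comp_add_sub_inner {U : Set E} (hu : UpperSemicontinuousOn u U)
    (x₀ a : E) (c : ℝ) :
    UpperSemicontinuousOn (fun x => u (x₀ + x) - c - ⟪a, x⟫) ((x₀ + ·) ⁻¹' U) := by
  have haffine : Continuous fun x => -c + -⟪a, x⟫ := by fun_prop
  simp only [sub_eq_add_neg, add_assoc]
  exact (hu.comp (continuous_const_add x₀).continuousOn (mapsTo_preimage _ _)).add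
    haffine.continuousOn.upperSemicontinuousOn

theorem isSymmetric_of_mem_closedSuperjet {x p : E} {X : E →L[ℝ] E}
    (h : (p, X) ∈ closedSuperjet u x) : (X : E →ₗ[ℝ] E).IsSymmetric := by
  have hclosed : IsClosed {y : E × E × (E →L[ℝ] E) | (y.2.2 : E →ₗ[ℝ] E).IsSymmetric} := by
    have hset : {y : E × E × (E →L[ℝ] E) | (y.2.2 : E →ₗ[ℝ] E).IsSymmetric} =
        ⋂ (h : E) (k : E), {y | ⟪y.2.2 h, k⟫ = ⟪h, y.2.2 k⟫} := by
      ext; simp [LinearMap.IsSymmetric]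
    rw [hset]
    exact isClosed_iInter fun h => isClosed_iInter fun k =>
      isClosed_eq (by fun_prop) (by fun_prop)
  exact hclosed.closure_subset_iff.2 (fun y hy => hy.1) h

theorem norm_le_of_isSymmetric (hT : (T : E →ₗ[ℝ] E).IsSymmetric) {C : ℝ} (hC : 0 ≤ C)
    (hle : ∀ k, |⟪T k, k⟫| ≤ C * ‖k‖ ^ 2) : ‖T‖ ≤ C := by
  rw [ContinuousLinearMap.norm_eq_iSup_rayleighQuotient T hT]
  refine ciSup_le fun k => ?_
  rw [ContinuousLinearMap.rayleighQuotient, T.reApplyInnerSelf_apply, abs_div, abs_sq]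
  exact div_le_of_le_mul₀ (sq_nonneg _) hC (hle k)

theorem continuous_add_smul_one (T : E →L[ℝ] E) : Continuous fun t : ℝ => T + t • 1 := by
  fun_prop

theorem continuous_add_smul_one_add_smul_mul_self (T : E →L[ℝ] E) (ε : ℝ) :
    Continuous fun t : ℝ => T + t • 1 + ε • ((T + t • 1) * (T + t • 1)) := by
  fun_prop

theorem norm_prodMk_le_of_isSymmetric {X : E →L[ℝ] E} {Y : F →L[ℝ] F}
    (hX : (X : E →ₗ[ℝ] E).IsSymmetric) (hY : (Y : F →ₗ[ℝ] F).IsSymmetric) {C : ℝ} (hC : 0 ≤ C)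
    (hle : ∀ k : WithLp 2 (E × F), |⟪X k.fst, k.fst⟫ + ⟪Y k.snd, k.snd⟫| ≤ C * ‖k‖ ^ 2) :
    ‖(X, Y)‖ ≤ C := by
  refine norm_prod_le_iff.2 ⟨norm_le_of_isSymmetric hX hC fun k => ?_,
    norm_le_of_isSymmetric hY hC fun k => ?_⟩
  · simpa using hle (WithLp.toLp 2 (k, 0))
  · simpa using hle (WithLp.toLp 2 (0, k))

theorem tendsto_of_forall_mem_ball {Z : Type*} [PseudoMetricSpace Z] {z : ℕ → Z} {z₀ : Z}
    {δ : ℕ → ℝ} (hz : ∀ n, z n ∈ ball z₀ (δ n)) (hδ : Tendsto δ atTop (𝓝 0)) :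
    Tendsto z atTop (𝓝 z₀) :=
  tendsto_iff_dist_tendsto_zero.2 (squeeze_zero (fun _ => dist_nonneg) (fun n => (hz n).le) hδ)

theorem mem_closedSuperjet_of_tendsto {x₀ p₀ : E} {X₀ : E →L[ℝ] E} {x p : ℕ → E}
    {X : ℕ → E →L[ℝ] E} (h : ∀ n, (p n, X n) ∈ superjet u (x n))
    (hxp : Tendsto (fun n => (x n, p n)) atTop (𝓝 (x₀, p₀))) (hX : Tendsto X atTop (𝓝 X₀)) :
    (p₀, X₀) ∈ closedSuperjet u x₀ :=
  mem_closure_of_tendsto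
    (hxp.fst_nhds.prodMk_nhds (hxp.snd_nhds.prodMk_nhds hX)) (.of_forall h)

variable {x₀ a : E} {y₀ c : F}
  {A : WithLp 2 (E × F) →L[ℝ] WithLp 2 (E × F)} {U : Set E} {V : Set F} {ε δ : ℝ}

theorem exists_closedBall_sub_inner_add_le
    (hjet : (WithLp.toLp 2 (a, c), A) ∈
      superjet (fun z => u z.fst + w z.snd) (WithLp.toLp 2 (x₀, y₀)))
    (hU : U ∈ 𝓝 x₀) (hV : V ∈ 𝓝 y₀) (hδ : 0 < δ) :
    ∃ r > 0, closedBall 0 r ⊆ (x₀ + ·) ⁻¹' U ∧ closedBall 0 r ⊆ (y₀ + ·) ⁻¹' V ∧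
      ∀ x ∈ closedBall 0 r, ∀ y ∈ closedBall 0 r,
        (u (x₀ + x) - u x₀ - ⟪a, x⟫) + (w (y₀ + y) - w y₀ - ⟪c, y⟫) ≤
          1 / 2 * ⟪(A + (2 * δ) • 1) (WithLp.toLp 2 (x, y)), WithLp.toLp 2 (x, y)⟫ := by
  have htoLp : Tendsto (fun z : E × F => WithLp.toLp 2 z) (𝓝 0) (𝓝 0) :=
    (WithLp.prod_continuous_toLp 2 E F).tendsto' 0 0 rfl
  have hUV : ∀ᶠ z : E × F in 𝓝 0, x₀ + z.1 ∈ U ∧ y₀ + z.2 ∈ V :=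
    (((continuous_const.add continuous_fst).tendsto' 0 x₀ (add_zero _)).eventually hU).and
      (((continuous_const.add continuous_snd).tendsto' 0 y₀ (add_zero _)).eventually hV)
  obtain ⟨r, hr, hball⟩ := nhds_basis_closedBall.mem_iff.1
    (hUV.and (htoLp.eventually (hjet.2 δ hδ)))
  have hE0 : (0 : E) ∈ closedBall 0 r := mem_closedBall_self hr.le
  have hF0 : (0 : F) ∈ closedBall 0 r := mem_closedBall_self hr.le
  have hmem x (hx : x ∈ closedBall (0 : E) r) y (hy : y ∈ closedBall (0 : F) r) :=
    hball (closedBall_prod_same (0 : E) (0 : F) r ▸ mk_mem_prod hx hy)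
  refine ⟨r, hr, fun x hx => (hmem x hx 0 hF0).1.1, fun y hy => (hmem 0 hE0 y hy).1.2,
    fun x hx y hy => ?_⟩
  have hle : u (x₀ + x) + w (y₀ + y) ≤
      u x₀ + w y₀ + ⟪WithLp.toLp 2 (a, c), WithLp.toLp 2 (x, y)⟫ +
        1 / 2 * ⟪A (WithLp.toLp 2 (x, y)), WithLp.toLp 2 (x, y)⟫ +
        δ * ‖WithLp.toLp 2 (x, y)‖ ^ 2 := (hmem x hx y hy).2
  have hinner : ⟪WithLp.toLp 2 (a, c), WithLp.toLp 2 (x, y)⟫ = ⟪a, x⟫ + ⟪c, y⟫ :=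
    WithLp.prod_inner_apply _ _
  rw [inner_add_smul_one_apply_self]
  linarith

variable [FiniteDimensional ℝ E] [FiniteDimensional ℝ F]

theorem exists_mem_closedSuperjet_of_tendsto {x p : ℕ → E} {y q : ℕ → F} {X : ℕ → E →L[ℝ] E}
    {Y : ℕ → F →L[ℝ] F} {lam β : ℕ → ℝ} {lam₀ β₀ : ℝ} {b : ℕ → WithLp 2 (E × F) → ℝ}
    {b₀ : WithLp 2 (E × F) → ℝ} (hxp : Tendsto (fun n => (x n, p n)) atTop (𝓝 (x₀, a)))
    (hyq : Tendsto (fun n => (y n, q n)) atTop (𝓝 (y₀, c)))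
    (hX : ∀ n, (p n, X n) ∈ superjet u (x n)) (hY : ∀ n, (q n, Y n) ∈ superjet w (y n))
    (hXY : ∀ n k, -(lam n * ‖k‖ ^ 2) ≤ ⟪X n k.fst, k.fst⟫ + ⟪Y n k.snd, k.snd⟫ ∧
      ⟪X n k.fst, k.fst⟫ + ⟪Y n k.snd, k.snd⟫ ≤ b n k)
    (hlam : Tendsto lam atTop (𝓝 lam₀)) (hβ : Tendsto β atTop (𝓝 β₀))
    (hb : ∀ k, Tendsto (b · k) atTop (𝓝 (b₀ k))) (hbβ : ∀ n k, b n k ≤ β n * ‖k‖ ^ 2) :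
    ∃ (X₀ : E →L[ℝ] E) (Y₀ : F →L[ℝ] F),
      (a, X₀) ∈ closedSuperjet u x₀ ∧ (c, Y₀) ∈ closedSuperjet w y₀ ∧
      ∀ k : WithLp 2 (E × F), -(lam₀ * ‖k‖ ^ 2) ≤ ⟪X₀ k.fst, k.fst⟫ + ⟪Y₀ k.snd, k.snd⟫ ∧
        ⟪X₀ k.fst, k.fst⟫ + ⟪Y₀ k.snd, k.snd⟫ ≤ b₀ k := by
  obtain ⟨C, hC⟩ := (hlam.abs.max hβ.abs).bddAbove_range
  have hbound n : (X n, Y n) ∈ closedBall 0 C := by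
    obtain ⟨hlamC, hβC⟩ := max_le_iff.1 (hC (mem_range_self n))
    refine mem_closedBall_zero_iff.2 (norm_prodMk_le_of_isSymmetric (hX n).1 (hY n).1
      ((abs_nonneg _).trans hlamC) fun k => abs_le.2 ⟨?_, ?_⟩)
    · grw [← (hXY n k).1, ← hlamC, ← le_abs_self]
    · grw [(hXY n k).2, hbβ n k, ← hβC, ← le_abs_self]
  obtain ⟨⟨X₀, Y₀⟩, -, φ, hφ, hlim⟩ := tendsto_subseq_of_bounded isBounded_closedBall hbound
  have hφ := hφ.tendsto_atTop
  have hform (k : WithLp 2 (E × F)) : Tendsto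
      (fun n => ⟪X (φ n) k.fst, k.fst⟫ + ⟪Y (φ n) k.snd, k.snd⟫) atTop
      (𝓝 (⟪X₀ k.fst, k.fst⟫ + ⟪Y₀ k.snd, k.snd⟫)) := by
    have hcont : Continuous fun Z : (E →L[ℝ] E) × (F →L[ℝ] F) =>
        ⟪Z.1 k.fst, k.fst⟫ + ⟪Z.2 k.snd, k.snd⟫ := by fun_prop
    exact (hcont.tendsto _).comp hlim
  refine ⟨X₀, Y₀, mem_closedSuperjet_of_tendsto (fun n => hX (φ n)) (hxp.comp hφ) hlim.fst_nhds,
    mem_closedSuperjet_of_tendsto (fun n => hY (φ n)) (hyq.comp hφ) hlim.snd_nhds,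
    fun k => ⟨?_, ?_⟩⟩
  · exact le_of_tendsto_of_tendsto' ((hlam.comp hφ).mul_const _).neg (hform k)
      fun n => (hXY (φ n) k).1
  · exact le_of_tendsto_of_tendsto' (hform k) ((hb k).comp hφ) fun n => (hXY (φ n) k).2

theorem exists_mem_superjet_of_add (hu : UpperSemicontinuousOn u U)
    (hw : UpperSemicontinuousOn w V) (hU : U ∈ 𝓝 x₀) (hV : V ∈ 𝓝 y₀)
    (hjet : (WithLp.toLp 2 (a, c), A) ∈
      superjet (fun z => u z.fst + w z.snd) (WithLp.toLp 2 (x₀, y₀)))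
    (hε : 0 < ε) (hδ : 0 < δ) {T : WithLp 2 (E × F) →L[ℝ] WithLp 2 (E × F)}
    (hT : T = A + (2 * δ) • 1) :
    ∃ (x p : E) (y q : F) (X : E →L[ℝ] E) (Y : F →L[ℝ] F),
      (x, p) ∈ ball (x₀, a) δ ∧ (y, q) ∈ ball (y₀, c) δ ∧
      (p, X) ∈ superjet u x ∧ (q, Y) ∈ superjet w y ∧
      ∀ k : WithLp 2 (E × F),
        -((1 / ε + ‖T‖) * ‖k‖ ^ 2) ≤ ⟪X k.fst, k.fst⟫ + ⟪Y k.snd, k.snd⟫ ∧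
        ⟪X k.fst, k.fst⟫ + ⟪Y k.snd, k.snd⟫ ≤ ⟪(T + ε • (T * T)) k, k⟫ + δ * ‖k‖ ^ 2 := by
  have hTsymm : (T : WithLp 2 (E × F) →ₗ[ℝ] WithLp 2 (E × F)).IsSymmetric :=
    hT ▸ isSymmetric_add_smul_one hjet.1 _
  have hBsymm : ((T + ε • (T * T) :) : WithLp 2 (E × F) →ₗ[ℝ] WithLp 2 (E × F)).IsSymmetric :=
    hTsymm.add ((hTsymm.mul_of_commute hTsymm (.refl _)).smul (c := ε) rfl)
  obtain ⟨r, hr, hrU, hrV, hle⟩ := exists_closedBall_sub_inner_add_le hjet hU hV hδ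
  obtain ⟨x, p, y, q, X, Y, hxp, hyq, hX, hY, hXY⟩ := exists_mem_superjet_add_le
    (isCompact_closedBall 0 r) (isCompact_closedBall 0 r)
    (closedBall_mem_nhds 0 hr) (closedBall_mem_nhds 0 hr)
    ((upperSemicontinuousOn_comp_add_sub_inner hu x₀ a (u x₀)).mono hrU)
    ((upperSemicontinuousOn_comp_add_sub_inner hw y₀ c (w y₀)).mono hrV)
    (by simp) (lam := 1 / ε + ‖T‖) (by positivity) hBsymm
    (fun x hx y hy η => by
      have hyoung := inner_apply_self_le_add_sq_norm_sub hTsymm hε (WithLp.toLp 2 (x, y)) η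
      have hxy := hle x hx y hy
      rw [← hT] at hxy
      linarith) hδ
  refine ⟨x₀ + x, a + p, y₀ + y, c + q, X, Y, ?_, ?_, mem_superjet_of_mem_superjet_sub_inner hX,
    mem_superjet_of_mem_superjet_sub_inner hY, hXY⟩
  · rw [← Prod.mk_add_mk, add_mem_ball_iff_norm]
    exact mem_ball_zero_iff.1 hxp
  · rw [← Prod.mk_add_mk, add_mem_ball_iff_norm]
    exact mem_ball_zero_iff.1 hyq

theorem exists_mem_closedSuperjet_of_add (hu : UpperSemicontinuousOn u U)
    (hw : UpperSemicontinuousOn w V) (hU : U ∈ 𝓝 x₀) (hV : V ∈ 𝓝 y₀)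
    (hjet : (WithLp.toLp 2 (a, c), A) ∈
      superjet (fun z => u z.fst + w z.snd) (WithLp.toLp 2 (x₀, y₀)))
    (hε : 0 < ε) :
    ∃ (X : E →L[ℝ] E) (Y : F →L[ℝ] F),
      (a, X) ∈ closedSuperjet u x₀ ∧ (c, Y) ∈ closedSuperjet w y₀ ∧
      ∀ k : WithLp 2 (E × F),
        -((1 / ε + ‖A‖) * ‖k‖ ^ 2) ≤ ⟪X k.fst, k.fst⟫ + ⟪Y k.snd, k.snd⟫ ∧
        ⟪X k.fst, k.fst⟫ + ⟪Y k.snd, k.snd⟫ ≤ ⟪(A + ε • (A * A)) k, k⟫ := by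
  set δ : ℕ → ℝ := fun n => 1 / ((n : ℝ) + 1)
  set T := fun t : ℝ => A + t • 1
  set B := fun t : ℝ => T t + ε • (T t * T t)
  have hδ : Tendsto δ atTop (𝓝 0) := tendsto_one_div_add_atTop_nhds_zero_nat
  have h2δ : Tendsto (fun n => 2 * δ n) atTop (𝓝 0) := by simpa using hδ.const_mul 2
  have hT : Tendsto (fun n => 1 / ε + ‖T (2 * δ n)‖) atTop (𝓝 (1 / ε + ‖A‖)) :=
    (((continuous_add_smul_one A).norm.tendsto' 0 ‖A‖ (by simp)).comp h2δ).const_add _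
  have hBnorm : Tendsto (fun n => ‖B (2 * δ n)‖ + δ n) atTop (𝓝 (‖B 0‖ + 0)) :=
    (((continuous_add_smul_one_add_smul_mul_self A ε).norm.tendsto 0).comp h2δ).add hδ
  have hBinner k : Tendsto (fun n => ⟪B (2 * δ n) k, k⟫ + δ n * ‖k‖ ^ 2) atTop
      (𝓝 ⟪(A + ε • (A * A)) k, k⟫) := by
    have hcont : Continuous fun t => ⟪B t k, k⟫ :=
      ((continuous_add_smul_one_add_smul_mul_self A ε).clm_apply continuous_const).inner
        continuous_const
    simpa [B, T] using ((hcont.tendsto 0).comp h2δ).add (hδ.mul_const (‖k‖ ^ 2))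
  choose x p y q X Y hxp hyq hX hY hXY using fun n : ℕ =>
    exists_mem_superjet_of_add hu hw hU hV hjet hε (Nat.one_div_pos_of_nat (n := n)) rfl
  refine exists_mem_closedSuperjet_of_tendsto (tendsto_of_forall_mem_ball hxp hδ)
    (tendsto_of_forall_mem_ball hyq hδ) hX hY hXY hT hBnorm hBinner fun n k => ?_
  grw [inner_apply_self_le_opNorm_mul_sq]
  exact le_of_eq (by ring)

end TheoremOnSums

section Matrices

variable {n : Type*} [Fintype n] [DecidableEq n]

theorem inner_toEuclideanCLM_of_apply_single
    (B : EuclideanSpace ℝ n →L[ℝ] EuclideanSpace ℝ n →L[ℝ] ℝ) (x y : EuclideanSpace ℝ n) :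
    ⟪x, Matrix.toEuclideanCLM (𝕜 := ℝ) (Matrix.of fun i j =>
      B (EuclideanSpace.single i 1) (EuclideanSpace.single j 1)) y⟫ = B x y := by
  rw [Matrix.inner_toEuclideanCLM]
  conv_rhs =>
    rw [← (EuclideanSpace.basisFun n ℝ).sum_repr x, ← (EuclideanSpace.basisFun n ℝ).sum_repr y]
  simp only [dotProduct, Matrix.mulVec, Matrix.of_apply, EuclideanSpace.basisFun_repr,
    EuclideanSpace.basisFun_apply, map_sum, map_smul, sum_apply, smul_apply, smul_eq_mul,
    Finset.mul_sum]
  rw [Finset.sum_comm]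
  simp only [mul_comm, mul_left_comm]

theorem matLE_of_inner_le {M N : Matrix n n ℝ} (hM : M.IsHermitian) (hN : N.IsHermitian)
    (hle : ∀ v, ⟪Matrix.toEuclideanCLM (𝕜 := ℝ) M v, v⟫ ≤
      ⟪Matrix.toEuclideanCLM (𝕜 := ℝ) N v, v⟫) : MatLE M N := by
  refine Matrix.isPositive_toEuclideanLin_iff.1
    ⟨Matrix.isSymmetric_toEuclideanLin_iff.2 (hN.sub hM), fun v => ?_⟩
  rw [← Matrix.coe_toEuclideanCLM_eq_toEuclideanLin, map_sub]
  simpa [inner_sub_left] using hle v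

theorem inner_toEuclideanCLM_fromBlocks {m : Type*} [Fintype m] [DecidableEq m]
    (M : Matrix m m ℝ) (N : Matrix n n ℝ) (v : EuclideanSpace ℝ (m ⊕ n)) :
    ⟪Matrix.toEuclideanCLM (𝕜 := ℝ) (Matrix.fromBlocks M 0 0 N) v, v⟫ =
      ⟪Matrix.toEuclideanCLM (𝕜 := ℝ) M (EuclideanSpace.sumEquivProd v).1,
        (EuclideanSpace.sumEquivProd v).1⟫ +
      ⟪Matrix.toEuclideanCLM (𝕜 := ℝ) N (EuclideanSpace.sumEquivProd v).2,
        (EuclideanSpace.sumEquivProd v).2⟫ := by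
  simp only [real_inner_comm, Matrix.inner_toEuclideanCLM]
  rw [Matrix.fromBlocks_mulVec]
  simp only [dotProduct, Matrix.zero_mulVec, add_zero, zero_add, Fintype.sum_sum_type,
    Sum.elim_inl, Sum.elim_inr]
  rfl

theorem prodBasis_eq_sumEquivProd_single {d : ℕ} (i : Fin d ⊕ Fin d) :
    prodBasis i = EuclideanSpace.sumEquivProd (𝕜 := ℝ) (EuclideanSpace.single i 1) := by
  rcases i with i | i <;> ext j <;> simp [prodBasis]

theorem inner_toEuclideanCLM_hessM {d : ℕ} (φ : Euc d → ℝ) (x v w : Euc d) :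
    ⟪v, Matrix.toEuclideanCLM (𝕜 := ℝ) (hessM φ x) w⟫ = fderiv ℝ (fderiv ℝ φ) x v w := by
  rw [← inner_toEuclideanCLM_of_apply_single]
  simp only [hessM, iteratedFDeriv_two_apply]
  rfl

theorem inner_toEuclideanCLM_hess2 {d : ℕ} (ψ : Euc d × Euc d → ℝ) (z : Euc d × Euc d)
    (v w : EuclideanSpace ℝ (Fin d ⊕ Fin d)) :
    ⟪v, Matrix.toEuclideanCLM (𝕜 := ℝ) (hess2 ψ z) w⟫ =
      fderiv ℝ (fderiv ℝ ψ) z (EuclideanSpace.sumEquivProd v) (EuclideanSpace.sumEquivProd w) := by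
  let J : EuclideanSpace ℝ (Fin d ⊕ Fin d) →L[ℝ] Euc d × Euc d :=
    EuclideanSpace.sumEquivProd.toContinuousLinearMap
  refine Eq.trans ?_ (inner_toEuclideanCLM_of_apply_single
    ((fderiv ℝ (fderiv ℝ ψ) z).bilinearComp J J) v w)
  simp only [hess2, iteratedFDeriv_two_apply, prodBasis_eq_sumEquivProd_single]
  rfl

theorem isHermitian_hess2 {d : ℕ} {ψ : Euc d × Euc d → ℝ} {z : Euc d × Euc d}
    (hψ : ContDiffAt ℝ 2 ψ z) : (hess2 ψ z).IsHermitian := by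
  ext i j
  simp only [hess2, Matrix.conjTranspose_apply, Matrix.of_apply, iteratedFDeriv_two_apply]
  exact hψ.isSymmSndFDerivAt (by simp) _ _

theorem toEuclideanCLM_hessM_eq {d : ℕ} {φ : Euc d → ℝ} {v : Euc d → Euc d} {x : Euc d}
    {D : Euc d →L[ℝ] Euc d} (hφ : ∀ᶠ y in 𝓝 x, HasGradientAt φ (v y) y)
    (hv : HasFDerivAt v D x) : Matrix.toEuclideanCLM (𝕜 := ℝ) (hessM φ x) = D := by
  have hfderiv : fderiv ℝ φ =ᶠ[𝓝 x] fun y => InnerProductSpace.toDual ℝ (Euc d) (v y) :=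
    hφ.mono fun y hy => hy.hasFDerivAt.fderiv
  ext1 w
  refine ext_inner_left ℝ fun k => ?_
  rw [inner_toEuclideanCLM_hessM, hfderiv.fderiv_eq, (hasFDerivAt_toDual_comp hv).fderiv]
  exact isSymmetric_of_hasFDerivAt_gradient hφ hv k w

end Matrices

section Viscosity

theorem nonpos_of_frequently_nonpos {X ι : Type*} [TopologicalSpace X] {f : X → ℝ} {x : X}
    (hf : LowerSemicontinuousAt f x) {l : Filter ι} {g : ι → X} (hg : Tendsto g l (𝓝 x))
    (h : ∃ᶠ i in l, f (g i) ≤ 0) : f x ≤ 0 :=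
  not_lt.1 fun hlt => h ((hg.eventually (hf 0 hlt)).mono fun _ => not_le.2)

variable {d : ℕ} {G : Euc d → Euc d → Mat d → ℝ} {U : Set (Euc d)} {u : Euc d → ℝ} {x p : Euc d}
  {M : Mat d}

/-- Viscosity subsolutions on `U` of the equation `G x Du D²u = 0`. -/
def IsViscositySubsolution (G : Euc d → Euc d → Mat d → ℝ) (U : Set (Euc d)) (u : Euc d → ℝ) :
    Prop :=
  ∀ x₀ ∈ U, ∀ φ : Euc d → ℝ, ContDiffAt ℝ 2 φ x₀ →
    IsLocalMax (fun x => u x - φ x) x₀ → G x₀ (gradient φ x₀) (hessM φ x₀) ≤ 0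

/-- Viscosity supersolutions on `U` of the equation `G x Du D²u = 0`. -/
def IsViscositySupersolution (G : Euc d → Euc d → Mat d → ℝ) (U : Set (Euc d))
    (u : Euc d → ℝ) : Prop :=
  ∀ x₀ ∈ U, ∀ φ : Euc d → ℝ, ContDiffAt ℝ 2 φ x₀ →
    IsLocalMin (fun x => u x - φ x) x₀ → 0 ≤ G x₀ (gradient φ x₀) (hessM φ x₀)

theorem IsViscositySupersolution.neg (hu : IsViscositySupersolution G U u) :
    IsViscositySubsolution (fun x p M => -G x (-p) (-M)) U (fun x => -u x) := by
  intro x₀ hx₀ φ hφ hmax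
  have hmin : IsLocalMin (fun x => u x - (-φ) x) x₀ :=
    hmax.neg.congr (.of_forall fun x => by simp [add_comm])
  have hgrad : gradient (-φ) x₀ = -gradient φ x₀ := by
    rw [gradient, fderiv_neg, map_neg]
    rfl
  have hhess : hessM (-φ) x₀ = -hessM φ x₀ := by
    ext i j
    simp [hessM, iteratedFDeriv_neg_apply]
  have hnonneg := hu x₀ hx₀ (-φ) hφ.neg hmin
  rw [hgrad, hhess] at hnonneg
  exact neg_nonpos.2 hnonneg

theorem IsViscositySubsolution.nonpos_of_mem_superjet (hu : IsViscositySubsolution G U u)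
    (hx : x ∈ U) (h : (p, Matrix.toEuclideanCLM (𝕜 := ℝ) M) ∈ superjet u x) {τ : ℝ}
    (hτ : 0 < τ) : G x p (M + τ • 1) ≤ 0 := by
  set T := Matrix.toEuclideanCLM (𝕜 := ℝ) (M + τ • 1) with hTdef
  have hT : T = Matrix.toEuclideanCLM (𝕜 := ℝ) M + τ • 1 := by
    rw [hTdef, map_add, map_smul, map_one]
  set φ : Euc d → ℝ := fun y => ⟪p, y - x⟫ + 1 / 2 * ⟪T (y - x), y - x⟫
  have hφ := hasGradientAt_inner_sub_add_half_inner_sub (hT ▸ isSymmetric_add_smul_one h.1 τ) p x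
  have hcontDiff : ContDiff ℝ 2 φ :=
    (contDiff_const.inner ℝ (contDiff_id.sub contDiff_const)).add (contDiff_const.mul
      ((T.contDiff.comp (contDiff_id.sub contDiff_const)).inner ℝ
        (contDiff_id.sub contDiff_const)))
  have hgrad : gradient φ x = p := (hφ x).gradient.trans (by simp)
  have hderiv : HasFDerivAt (fun y => p + T (y - x)) T x := by
    simpa using (T.hasFDerivAt.comp x ((hasFDerivAt_id x).sub_const x)).const_add p
  have hhess : hessM φ x = M + τ • 1 :=
    Matrix.toEuclideanCLM.injective (toEuclideanCLM_hessM_eq (.of_forall hφ) hderiv)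
  have hmax : IsLocalMax (fun y => u y - φ y) x := by
    have hsub : Tendsto (· - x) (𝓝 x) (𝓝 0) := (continuous_sub_right x).tendsto' x 0 (sub_self x)
    filter_upwards [hsub.eventually (h.2 (τ / 2) (half_pos hτ))] with y hy
    simp only [φ, sub_self, hT, inner_add_smul_one_apply_self, inner_zero_right, map_zero,
      norm_zero]
    rw [add_sub_cancel] at hy
    linarith
  simpa only [hgrad, hhess] using hu x hx φ hcontDiff.contDiffAt hmax

theorem IsViscositySubsolution.nonpos_of_mem_closedSuperjet (hu : IsViscositySubsolution G U u)
    (hU : IsOpen U)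
    (hG : LowerSemicontinuousOn (fun z : Euc d × Euc d × Mat d => G z.1 z.2.1 z.2.2) (U ×ˢ univ))
    (hx : x ∈ U) (h : (p, Matrix.toEuclideanCLM (𝕜 := ℝ) M) ∈ closedSuperjet u x) :
    G x p M ≤ 0 := by
  have hGat (q : Euc d × Mat d) :
      LowerSemicontinuousAt (fun z : Euc d × Euc d × Mat d => G z.1 z.2.1 z.2.2) (x, q) :=
    have hmem : (x, q) ∈ U ×ˢ univ := ⟨hx, mem_univ q⟩
    fun t ht => (hU.prod isOpen_univ).nhdsWithin_eq hmem ▸ hG (x, q) hmem t ht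
  let toMat : (Euc d →L[ℝ] Euc d) → Mat d := (Matrix.toEuclideanCLM (𝕜 := ℝ)).symm
  have htoMat : Continuous toMat := by
    exact LinearMap.continuous_of_finiteDimensional
      ((Matrix.toEuclideanCLM (n := Fin d) (𝕜 := ℝ)).symm.toAlgEquiv.toLinearMap)
  have hperturb (τ : ℝ) (hτ : 0 < τ) : G x p (M + τ • 1) ≤ 0 := by
    have hmap : Continuous fun j : Euc d × Euc d × (Euc d →L[ℝ] Euc d) =>
        (j.1, j.2.1, toMat j.2.2 + τ • 1) := by fun_prop
    refine nonpos_of_frequently_nonpos (f := fun z => G z.1 z.2.1 z.2.2) (hGat (p, M + τ • 1))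
      (hmap.tendsto' (x, p, Matrix.toEuclideanCLM (𝕜 := ℝ) M) _ (by simp [toMat]))
      (((mem_closure_iff_frequently.1 h).and_eventually
        (continuous_fst.continuousAt.eventually (hU.mem_nhds hx))).mono fun j hj => ?_)
    exact hu.nonpos_of_mem_superjet hj.2 (by simpa [toMat] using hj.1) hτ
  have hlim : Tendsto (fun τ : ℝ => (x, p, M + τ • (1 : Mat d))) (𝓝[>] (0 : ℝ)) (𝓝 (x, p, M)) :=
    ((by fun_prop : Continuous fun τ : ℝ => (x, p, M + τ • (1 : Mat d))).tendsto' 0 _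
      (by simp)).mono_left nhdsWithin_le_nhds
  have hev : ∀ᶠ τ in 𝓝[>] (0 : ℝ), G x p (M + τ • 1) ≤ 0 :=
    eventually_mem_nhdsWithin.mono hperturb
  exact nonpos_of_frequently_nonpos (f := fun z => G z.1 z.2.1 z.2.2) (hGat (p, M)) hlim
    hev.frequently

end Viscosity

section TestFunction

variable {E F : Type*} [NormedAddCommGroup E] [InnerProductSpace ℝ E] [NormedAddCommGroup F]
  [InnerProductSpace ℝ F] [CompleteSpace E] [CompleteSpace F] {ψ : E × F → ℝ} {x : E} {y : F}

theorem fderiv_apply_eq_inner_gradient_add (hψ : DifferentiableAt ℝ ψ (x, y)) (k : E × F) :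
    fderiv ℝ ψ (x, y) k =
      ⟪gradient (fun x => ψ (x, y)) x, k.1⟫ + ⟪gradient (fun y => ψ (x, y)) y, k.2⟫ := by
  have hfst : HasFDerivAt (fun x => ψ (x, y))
      ((fderiv ℝ ψ (x, y)).comp (ContinuousLinearMap.inl ℝ _ _)) x :=
    HasFDerivAt.comp x (f := fun x => (x, y)) hψ.hasFDerivAt (hasFDerivAt_prodMk_left _ _)
  have hsnd : HasFDerivAt (fun y => ψ (x, y))
      ((fderiv ℝ ψ (x, y)).comp (ContinuousLinearMap.inr ℝ _ _)) y :=
    HasFDerivAt.comp y (f := fun y => (x, y)) hψ.hasFDerivAt (hasFDerivAt_prodMk_right _ _)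
  rw [inner_gradient_left, inner_gradient_left, hfst.fderiv, hsnd.fderiv]
  simp [← map_add]

theorem mem_superjet_of_isLocalMax_add_sub {u : E → ℝ} {w : F → ℝ}
    {A : WithLp 2 (E × F) →L[ℝ] WithLp 2 (E × F)} (hψ : ContDiffAt ℝ 2 ψ (x, y))
    (hA : ∀ k l, ⟪k, A l⟫ = fderiv ℝ (fderiv ℝ ψ) (x, y) (WithLp.ofLp k) (WithLp.ofLp l))
    (hmax : IsLocalMax (fun z => u z.1 + w z.2 - ψ z) (x, y)) :
    (WithLp.toLp 2 (gradient (fun x => ψ (x, y)) x, gradient (fun y => ψ (x, y)) y), A) ∈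
      superjet (fun z => u z.fst + w z.snd) (WithLp.toLp 2 (x, y)) := by
  refine ⟨fun k l => ?_, fun η hη => ?_⟩
  · rw [real_inner_comm]
    exact (hA l k).trans ((hψ.isSymmSndFDerivAt (by simp) _ _).trans (hA k l).symm)
  have hderiv : ∀ᶠ z in 𝓝 (x, y), HasFDerivAt ψ (fderiv ℝ ψ z) z :=
    (hψ.eventually (by simp)).mono fun z hz => (hz.differentiableAt two_ne_zero).hasFDerivAt
  have hderiv' : HasFDerivAt (fderiv ℝ ψ) (fderiv ℝ (fderiv ℝ ψ) (x, y)) (x, y) :=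
    ((hψ.fderiv_right (m := 1) (by norm_num)).differentiableAt one_ne_zero).hasFDerivAt
  have hofLp : Tendsto (WithLp.ofLp : WithLp 2 (E × F) → E × F) (𝓝 0) (𝓝 0) :=
    (WithLp.prod_continuous_ofLp 2 E F).tendsto' 0 0 rfl
  have htrans : Tendsto (fun k : E × F => (x, y) + k) (𝓝 0) (𝓝 (x, y)) :=
    (continuous_const_add (x, y)).tendsto' 0 _ (add_zero _)
  filter_upwards [(htrans.comp hofLp).eventually hmax,
    hofLp.eventually ((taylor_two_isLittleO hderiv hderiv').def hη)] with k hk htaylor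
  have hnorm : ‖WithLp.ofLp k‖ ≤ ‖k‖ := by
    simpa using (WithLp.prod_lipschitzWith_ofLp 2 E F).dist_le_mul k 0
  have hgrad := fderiv_apply_eq_inner_gradient_add hderiv.self_of_nhds.differentiableAt k.ofLp
  have hinner := WithLp.prod_inner_apply (𝕜 := ℝ)
    (WithLp.toLp 2 (gradient (fun x => ψ (x, y)) x, gradient (fun y => ψ (x, y)) y)) k
  have hhess : ⟪A k, k⟫ = fderiv ℝ (fderiv ℝ ψ) (x, y) k.ofLp k.ofLp :=
    (real_inner_comm _ _).trans (hA k k)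
  have hupper : ψ ((x, y) + k.ofLp) ≤ ψ (x, y) + fderiv ℝ ψ (x, y) k.ofLp +
      1 / 2 * fderiv ℝ (fderiv ℝ ψ) (x, y) k.ofLp k.ofLp + η * ‖k‖ ^ 2 := by
    rw [norm_pow, norm_norm, Real.norm_eq_abs, smul_eq_mul] at htaylor
    grw [hnorm] at htaylor
    linarith [le_of_abs_le htaylor]
  rw [← hhess, hgrad] at hupper
  have hmaxk : u (x + k.fst) + w (y + k.snd) - ψ ((x, y) + k.ofLp) ≤ u x + w y - ψ (x, y) := hk
  change u (x + k.fst) + w (y + k.snd) ≤ u x + w y + _ + _ + _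
  rw [hinner]
  linarith

end TestFunction

section Coordinates

theorem norm_conjStarAlgEquiv {E F : Type*} [NormedAddCommGroup E] [InnerProductSpace ℝ E]
    [CompleteSpace E] [NormedAddCommGroup F] [InnerProductSpace ℝ F] [CompleteSpace F]
    (e : E ≃ₗᵢ[ℝ] F) (T : E →L[ℝ] E) : ‖e.conjStarAlgEquiv T‖ = ‖T‖ := by
  rw [LinearIsometryEquiv.conjStarAlgEquiv_apply]
  exact (LinearIsometry.norm_toContinuousLinearMap_comp e.toLinearIsometry).trans
    (ContinuousLinearMap.opNorm_comp_linearIsometryEquiv T e.symm)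

variable {d : ℕ} {u w : Euc d → ℝ} {ψ : Euc d × Euc d → ℝ} {U V : Set (Euc d)} {x y : Euc d}

theorem isHermitian_of_mem_closedSuperjet {M : Mat d} {p : Euc d}
    (h : (p, Matrix.toEuclideanCLM (𝕜 := ℝ) M) ∈ closedSuperjet u x) : M.IsHermitian :=
  Matrix.isSymmetric_toEuclideanLin_iff.1 (isSymmetric_of_mem_closedSuperjet h)

theorem exists_mem_closedSuperjet_matLE {ε : ℝ} (hu : UpperSemicontinuousOn u U)
    (hw : UpperSemicontinuousOn w V) (hU : U ∈ 𝓝 x) (hV : V ∈ 𝓝 y)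
    (hψ : ContDiffAt ℝ 2 ψ (x, y)) (hmax : IsLocalMax (fun z => u z.1 + w z.2 - ψ z) (x, y))
    (hε : 0 < ε) :
    ∃ X Y : Mat d,
      (gradient (fun x => ψ (x, y)) x, Matrix.toEuclideanCLM (𝕜 := ℝ) X) ∈ closedSuperjet u x ∧
      (gradient (fun y => ψ (x, y)) y, Matrix.toEuclideanCLM (𝕜 := ℝ) Y) ∈ closedSuperjet w y ∧
      MatLE (-((1 / ε + matOpNorm (hess2 ψ (x, y))) • 1)) (Matrix.fromBlocks X 0 0 Y) ∧
      MatLE (Matrix.fromBlocks X 0 0 Y)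
        (hess2 ψ (x, y) + ε • (hess2 ψ (x, y) * hess2 ψ (x, y))) := by
  set H := hess2 ψ (x, y)
  let e := PiLp.sumPiLpEquivProdLpPiLp (𝕜 := ℝ) 2 fun _ : Fin d ⊕ Fin d => ℝ
  set A := e.conjStarAlgEquiv (Matrix.toEuclideanCLM (𝕜 := ℝ) H)
  have hA (k l) : ⟪k, A l⟫ = fderiv ℝ (fderiv ℝ ψ) (x, y) (WithLp.ofLp k) (WithLp.ofLp l) := by
    rw [LinearIsometryEquiv.conjStarAlgEquiv_apply_apply, ← e.symm.inner_map_map,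
      e.symm_apply_apply, inner_toEuclideanCLM_hess2]
    rfl
  obtain ⟨T, S, hT, hS, hle⟩ := exists_mem_closedSuperjet_of_add hu hw hU hV
    (mem_superjet_of_isLocalMax_add_sub hψ hA hmax) hε
  obtain ⟨X, rfl⟩ := Matrix.toEuclideanCLM.surjective T
  obtain ⟨Y, rfl⟩ := Matrix.toEuclideanCLM.surjective S
  have hblocks : (Matrix.fromBlocks X 0 0 Y).IsHermitian :=
    (isHermitian_of_mem_closedSuperjet hT).fromBlocks (by simp)
      (isHermitian_of_mem_closedSuperjet hS)
  have hH : H.IsHermitian := isHermitian_hess2 hψ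
  refine ⟨X, Y, hT, hS, matLE_of_inner_le ?_ hblocks fun v => ?_,
    matLE_of_inner_le hblocks ?_ fun v => ?_⟩
  · exact (Matrix.isHermitian_one.smul (IsSelfAdjoint.all _)).neg
  · rw [inner_toEuclideanCLM_fromBlocks]
    refine le_trans (le_of_eq ?_) (hle (e v)).1
    rw [norm_conjStarAlgEquiv, e.norm_map]
    simp [matOpNorm, real_inner_smul_left]
  · exact hH.add ((by simpa [sq] using hH.pow 2 : (H * H).IsHermitian).smul (IsSelfAdjoint.all _))
  · rw [inner_toEuclideanCLM_fromBlocks]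
    refine (hle (e v)).2.trans_eq ?_
    simp only [A, ← map_mul, ← map_smul, ← map_add]
    rw [LinearIsometryEquiv.conjStarAlgEquiv_apply_apply,
      e.symm_apply_apply, e.inner_map_map]

end Coordinates

theorem statement3_general {d : ℕ} {G H : Euc d → Euc d → Mat d → ℝ} {U V : Set (Euc d)}
    {u w : Euc d → ℝ} {ψ : Euc d × Euc d → ℝ} {x y : Euc d} {ε : ℝ} (hU : IsOpen U) (hV : IsOpen V)
    (hG : LowerSemicontinuousOn (fun z : Euc d × Euc d × Mat d => G z.1 z.2.1 z.2.2) (U ×ˢ univ))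
    (hH : UpperSemicontinuousOn (fun z : Euc d × Euc d × Mat d => H z.1 z.2.1 z.2.2) (V ×ˢ univ))
    (hu : UpperSemicontinuousOn u U) (hw : LowerSemicontinuousOn w V)
    (husub : IsViscositySubsolution G U u) (hwsuper : IsViscositySupersolution H V w)
    (hx : x ∈ U) (hy : y ∈ V) (hψ : ContDiffAt ℝ 2 ψ (x, y))
    (hmax : IsLocalMax (fun z : Euc d × Euc d => u z.1 - w z.2 - ψ z) (x, y)) (hε : 0 < ε) :
    ∃ X Y : Mat d, X.IsHermitian ∧ Y.IsHermitian ∧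
      G x (gradient (fun x => ψ (x, y)) x) X ≤ 0 ∧
      0 ≤ H y (-gradient (fun y => ψ (x, y)) y) Y ∧
      MatLE (-((1 / ε + matOpNorm (hess2 ψ (x, y))) • 1)) (Matrix.fromBlocks X 0 0 (-Y)) ∧
      MatLE (Matrix.fromBlocks X 0 0 (-Y))
        (hess2 ψ (x, y) + ε • (hess2 ψ (x, y) * hess2 ψ (x, y))) := by
  obtain ⟨X, Y, hX, hY, hlower, hupper⟩ := exists_mem_closedSuperjet_matLE hu hw.neg
    (hU.mem_nhds hx) (hV.mem_nhds hy) hψ hmax hε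
  have hHneg : LowerSemicontinuousOn
      (fun z : Euc d × Euc d × Mat d => -H z.1 (-z.2.1) (-z.2.2)) (V ×ˢ univ) :=
    (hH.comp (g := fun z : Euc d × Euc d × Mat d => (z.1, -z.2.1, -z.2.2)) (by fun_prop)
      fun z hz => ⟨hz.1, trivial⟩).neg
  refine ⟨X, -Y, isHermitian_of_mem_closedSuperjet hX, (isHermitian_of_mem_closedSuperjet hY).neg,
    husub.nonpos_of_mem_closedSuperjet hU hG hx hX,
    neg_nonpos.1 (hwsuper.neg.nonpos_of_mem_closedSuperjet hV hHneg hy hY), ?_, ?_⟩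
  · rwa [neg_neg]
  · rwa [neg_neg]

/-- the Ishii–Lions Lemma (Proposition 3.1). -/
theorem statement3
    (d : ℕ) (hd : 1 ≤ d)
    (G : Euc d → Euc d → Mat d → ℝ)
    (hGc : ContinuousOn (fun z : Euc d × Euc d × Mat d => G z.1 z.2.1 z.2.2)
      ((ball (0 : Euc d) 1) ×ˢ (univ : Set (Euc d × Mat d))))
    (hGell : ∀ (x p : Euc d) (M N : Mat d), (M - N).PosSemidef → G x p M ≤ G x p N)
    (u : Euc d → ℝ) (hu : ContinuousOn u (ball 0 1))
    (husub : ∀ x₀ ∈ ball (0 : Euc d) 1, ∀ φ : Euc d → ℝ, ContDiffAt ℝ 2 φ x₀ →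
      IsLocalMax (fun x => u x - φ x) x₀ → G x₀ (gradient φ x₀) (hessM φ x₀) ≤ 0)
    (husuper : ∀ x₀ ∈ ball (0 : Euc d) 1, ∀ φ : Euc d → ℝ, ContDiffAt ℝ 2 φ x₀ →
      IsLocalMin (fun x => u x - φ x) x₀ → 0 ≤ G x₀ (gradient φ x₀) (hessM φ x₀))
    (Ω : Set (Euc d)) (hΩo : IsOpen Ω) (hΩ : Ω ⊆ ball 0 1)
    (ψ : Euc d × Euc d → ℝ)
    (hψ : ∃ U : Set (Euc d × Euc d), IsOpen U ∧ (closure Ω) ×ˢ (closure Ω) ⊆ U ∧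
      ContDiffOn ℝ 2 ψ U)
    (xb yb : Euc d) (hxb : xb ∈ Ω) (hyb : yb ∈ Ω)
    (hmax : IsLocalMaxOn (fun z : Euc d × Euc d => (u z.1 - u z.2) - ψ z) (Ω ×ˢ Ω) (xb, yb)) :
    ∀ ε > (0:ℝ), ∃ X Y : Mat d, X.IsHermitian ∧ Y.IsHermitian ∧
      G xb (gradient (fun x => ψ (x, yb)) xb) X ≤ 0 ∧
      0 ≤ G yb (-(gradient (fun y => ψ (xb, y)) yb)) Y ∧
      MatLE (-((1/ε + matOpNorm (hess2 ψ (xb, yb))) •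
          (1 : Matrix (Fin d ⊕ Fin d) (Fin d ⊕ Fin d) ℝ)))
        (Matrix.fromBlocks X 0 0 (-Y)) ∧
      MatLE (Matrix.fromBlocks X 0 0 (-Y))
        (hess2 ψ (xb, yb) + ε • (hess2 ψ (xb, yb) * hess2 ψ (xb, yb))) := by
  intro ε hε
  obtain ⟨W, hW, hΩW, hψW⟩ := hψ
  exact statement3_general isOpen_ball isOpen_ball hGc.lowerSemicontinuousOn
    hGc.upperSemicontinuousOn hu.upperSemicontinuousOn hu.lowerSemicontinuousOn husub husuper
    (hΩ hxb) (hΩ hyb)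
    (hψW.contDiffAt (hW.mem_nhds (hΩW ⟨subset_closure hxb, subset_closure hyb⟩)))
    (hmax.isLocalMax ((hΩo.prod hΩo).mem_nhds ⟨hxb, hyb⟩)) hε

end
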